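/- K-user system error exponent (Corollary 2). Fix for each user k a finite rate set {r_{k,1},…,r_{k,M}} ⊂ [0,∞) and input distributions P_{X_k|r} on 𝒳_k, and an operation region 𝓡 ⊆ 𝒢 = ∏_k {r_{k,1},…,r_{k,M}} with 𝓡 and 𝒢∖𝓡 nonempty. Then there exists a sequence of decoders (D_N)_{N≥1} such that liminf_{N→∞} −(1/N)·log P_es(D_N) ≥ min{ min_{S⊊{1,…,K}} min_{r,r̃∈𝓡 : r_S = r̃_S} E_m^S(r,r̃), min_{S⊊{1,…,K}} min_{r∈𝓡, r̃∈𝒢∖𝓡 : r_S = r̃_S} E_i^S(r,r̃) }, where S ranges over proper subsets of {1,…,K} and inner minima over empty index sets are omitted (treated as +∞). -/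

import Mathlib

open scoped BigOperators Classical

noncomputable section

/-- `W` is a discrete memoryless multiple access channel. -/
def IsMAC {K : ℕ} {𝓧 : Fin K → Type*} {𝓨 : Type*} [Fintype 𝓨]
    (W : (∀ k, 𝓧 k) → 𝓨 → ℝ) : Prop :=
  (∀ x y, 0 ≤ W x y) ∧ ∀ x, ∑ y, W x y = 1

/-- `P` is a probability distribution on `𝓧`. -/
def IsDist {𝓧 : Type*} [Fintype 𝓧] (P : 𝓧 → ℝ) : Prop :=
  (∀ x, 0 ≤ P x) ∧ ∑ x, P x = 1

/-- The `N`-fold memoryless extension `W^N(y|(x_1,…,x_K))`. -/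
def WnK {K : ℕ} {𝓧 : Fin K → Type*} {𝓨 : Type*} (W : (∀ k, 𝓧 k) → 𝓨 → ℝ)
    {N : ℕ} (x : ∀ k, Fin N → 𝓧 k) (y : Fin N → 𝓨) : ℝ :=
  ∏ j, W (fun k => x k j) (y j)

/-- Merge single-letter inputs indexed by a subset `S` and by its complement
into a full input tuple. -/
def mergeS {K : ℕ} {𝓧 : Fin K → Type*} (S : Finset (Fin K))
    (xs : ∀ k : {k : Fin K // k ∈ S}, 𝓧 k.1)
    (xb : ∀ k : {k : Fin K // k ∉ S}, 𝓧 k.1) : ∀ k, 𝓧 k :=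
  fun k => if h : k ∈ S then xs ⟨k, h⟩ else xb ⟨k, h⟩

/-- Number of messages of user `k` at rate index `i`: `⌊e^{N r_{k,i}}⌋`. -/
def numMsgK {K M : ℕ} (N : ℕ) (rate : Fin K → Fin M → ℝ) (k : Fin K) (i : Fin M) : ℕ :=
  ⌊Real.exp (N * rate k i)⌋₊

/-- A realization of the random codebooks of all `K` users. -/
abbrev CbkK {K M : ℕ} (𝓧 : Fin K → Type*) (N : ℕ) (rate : Fin K → Fin M → ℝ) : Type _ :=
  ∀ k, (i : Fin M) → Fin (numMsgK N rate k i) → Fin N → 𝓧 k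

/-- A message-and-rate vector pair: for each user, a rate index together with a message. -/
abbrev MsgK {K M : ℕ} (N : ℕ) (rate : Fin K → Fin M → ℝ) : Type :=
  ∀ k, (i : Fin M) × Fin (numMsgK N rate k i)

/-- The rate (index) vector of a message-and-rate vector pair. -/
def rv {K M : ℕ} {N : ℕ} {rate : Fin K → Fin M → ℝ} (p : MsgK N rate) : Fin K → Fin M :=
  fun k => (p k).1

/-- The transmitted codewords of a message-and-rate vector pair, in codebooks `c`. -/
def cw {K M : ℕ} {𝓧 : Fin K → Type*} {N : ℕ} {rate : Fin K → Fin M → ℝ}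
    (c : CbkK 𝓧 N rate) (p : MsgK N rate) : ∀ k, Fin N → 𝓧 k :=
  fun k => c k (p k).1 (p k).2

/-- Probability of a realization of the codebooks: all symbols independent,
user `k`'s codewords of rate index `i` having symbol distribution `Pd k i`. -/
def cbkProbK {K M : ℕ} {𝓧 : Fin K → Type*} [∀ k, Fintype (𝓧 k)] {N : ℕ}
    (rate : Fin K → Fin M → ℝ) (Pd : ∀ k, Fin M → 𝓧 k → ℝ) (c : CbkK 𝓧 N rate) : ℝ :=
  ∏ k, ∏ i, ∏ w, ∏ j, Pd k i (c k i w j)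

/-- The probability of the event `E` of the codebooks and the channel output,
when the message-and-rate vector pair `p` is transmitted. -/
def prTxK {K M : ℕ} {𝓧 : Fin K → Type*} [∀ k, Fintype (𝓧 k)]
    {𝓨 : Type*} [Fintype 𝓨] (W : (∀ k, 𝓧 k) → 𝓨 → ℝ) {N : ℕ}
    (rate : Fin K → Fin M → ℝ) (Pd : ∀ k, Fin M → 𝓧 k → ℝ) (p : MsgK N rate)
    (E : CbkK 𝓧 N rate → (Fin N → 𝓨) → Prop) : ℝ :=
  ∑ c : CbkK 𝓧 N rate, ∑ y : Fin N → 𝓨,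
    cbkProbK rate Pd c * WnK W (cw c p) y * (if E c y then (1:ℝ) else 0)

/-- The Gallager-type sum appearing in the exponent `E_m(S, ·)`:
the distributions `P k` correspond to `P_{X_k|r_k}`, `Q k` to `P_{X_k|r̃_k}`. -/
def GmK {K : ℕ} {𝓧 : Fin K → Type*} [∀ k, Fintype (𝓧 k)] {𝓨 : Type*} [Fintype 𝓨]
    (W : (∀ k, 𝓧 k) → 𝓨 → ℝ) (S : Finset (Fin K))
    (P Q : ∀ k, 𝓧 k → ℝ) (ρ s : ℝ) : ℝ :=
  ∑ y : 𝓨, ∑ xs : ∀ k : {k : Fin K // k ∈ S}, 𝓧 k.1,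
    (∏ k, P k.1 (xs k)) *
      ((∑ xb : ∀ k : {k : Fin K // k ∉ S}, 𝓧 k.1,
          (∏ k, P k.1 (xb k)) * W (mergeS S xs xb) y ^ (1 - s)) *
        (∑ xb : ∀ k : {k : Fin K // k ∉ S}, 𝓧 k.1,
          (∏ k, Q k.1 (xb k)) * W (mergeS S xs xb) y ^ (s / ρ)) ^ ρ)

/-- The exponent `E_m(S, r̃, P_{X|r}, P_{X|r̃})`, where `rsum = Σ_{k∉S} r̃_k`. -/
def EmK {K : ℕ} {𝓧 : Fin K → Type*} [∀ k, Fintype (𝓧 k)] {𝓨 : Type*} [Fintype 𝓨]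
    (W : (∀ k, 𝓧 k) → 𝓨 → ℝ) (S : Finset (Fin K)) (rsum : ℝ)
    (P Q : ∀ k, 𝓧 k → ℝ) : ℝ :=
  sSup ((fun ρ => -ρ * rsum +
    sSup ((fun s => -Real.log (GmK W S P Q ρ s)) '' Set.Ioc (0:ℝ) 1)) '' Set.Ioc (0:ℝ) 1)

/-- The sum appearing in the exponent `E_i(S, ·)`:
the distributions `P k` correspond to `P_{X_k|r_k}`, `Q k` to `P_{X_k|r'_k}`. -/
def GiK {K : ℕ} {𝓧 : Fin K → Type*} [∀ k, Fintype (𝓧 k)] {𝓨 : Type*} [Fintype 𝓨]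
    (W : (∀ k, 𝓧 k) → 𝓨 → ℝ) (S : Finset (Fin K))
    (P Q : ∀ k, 𝓧 k → ℝ) (ρ s : ℝ) : ℝ :=
  ∑ y : 𝓨, ∑ xs : ∀ k : {k : Fin K // k ∈ S}, 𝓧 k.1,
    (∏ k, P k.1 (xs k)) *
      ((∑ xb : ∀ k : {k : Fin K // k ∉ S}, 𝓧 k.1,
          (∏ k, P k.1 (xb k)) * W (mergeS S xs xb) y ^ (s / (s + ρ))) ^ (s + ρ) *
        (∑ xb : ∀ k : {k : Fin K // k ∉ S}, 𝓧 k.1,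
          (∏ k, Q k.1 (xb k)) * W (mergeS S xs xb) y) ^ (1 - s))

/-- The exponent `E_i^{S,ρ,s}(r, r')` with explicit parameters `ρ, s`,
where `rsum = Σ_{k∉S} r_k`. -/
def EiKP {K : ℕ} {𝓧 : Fin K → Type*} [∀ k, Fintype (𝓧 k)] {𝓨 : Type*} [Fintype 𝓨]
    (W : (∀ k, 𝓧 k) → 𝓨 → ℝ) (S : Finset (Fin K)) (rsum ρ s : ℝ)
    (P Q : ∀ k, 𝓧 k → ℝ) : ℝ :=
  -ρ * rsum - Real.log (GiK W S P Q ρ s)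

/-- The exponent `E_i(S, r, r̃)`, where `rsum = Σ_{k∉S} r_k`. -/
def EiK {K : ℕ} {𝓧 : Fin K → Type*} [∀ k, Fintype (𝓧 k)] {𝓨 : Type*} [Fintype 𝓨]
    (W : (∀ k, 𝓧 k) → 𝓨 → ℝ) (S : Finset (Fin K)) (rsum : ℝ)
    (P Q : ∀ k, 𝓧 k → ℝ) : ℝ :=
  sSup ((fun ρ =>
    sSup ((fun s => EiKP W S rsum ρ s P Q) '' Set.Ioc (0:ℝ) (1 - ρ))) '' Set.Ioo (0:ℝ) 1)

/-- The system error probability of the decoder `D`: the maximum, over all transmitted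
message-and-rate vector pairs, of the decoding error probability (rate vector in the
operation region `R`) and the collision miss detection probability (rate vector
outside `R`). -/
def PesK {K M : ℕ} {𝓧 : Fin K → Type*} [∀ k, Fintype (𝓧 k)]
    {𝓨 : Type*} [Fintype 𝓨] (W : (∀ k, 𝓧 k) → 𝓨 → ℝ) (N : ℕ)
    (rate : Fin K → Fin M → ℝ) (Pd : ∀ k, Fin M → 𝓧 k → ℝ)
    (R : Finset (Fin K → Fin M))
    (D : CbkK 𝓧 N rate → (Fin N → 𝓨) → Option (MsgK N rate)) : ℝ :=
  sSup (Set.range (fun p : MsgK N rate =>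
    if rv p ∈ R then prTxK W rate Pd p (fun c y => D c y ≠ some p)
    else prTxK W rate Pd p (fun c y => D c y ≠ none)))

/-!
The decoder outputs the pair of the operation region that is strictly more likely than all others
of the region, provided that it also passes a likelihood threshold test against every rate vector
outside the region. By the union bound its error is at most a constant number of terms, one for each
set `S` of users on which the competing pair agrees with the transmitted one and each rate vector of
the competitor. Given the codeword of the transmitted pair, the codewords of such a competitor
outside `S` are fresh and independent, so each term is a one-shot bound of Gallager type for the
`N`-fold channel; the moments in it factor over the letters, which makes it the `N`-th power of the
single-letter sum in `E_m^S` or `E_i^S`. In the case of `E_i^S` the threshold is the one that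
balances false rejection against missed collision.

Boundedly many terms `exp (-N E)` have exponent `E`. The error probability also decays no faster
than exponentially, because a positive exponent `E_i^S` forces an output that a pair inside the
region and a pair outside it both produce with positive probability. This keeps the limit inferior
finite, which matters because an unbounded one has the junk value `0`.
-/

section ProductSums

variable {ι : Type*} [Fintype ι] [DecidableEq ι] {α : ι → Type*} [∀ i, Fintype (α i)]

/-- The law of a word of `N` independent letters, each with law `P`. -/
def iidLaw {𝓧 : Type*} (N : ℕ) (P : 𝓧 → ℝ) (v : Fin N → 𝓧) : ℝ := ∏ j, P (v j)

lemma sum_prod_eq_one {μ : ∀ i, α i → ℝ} (hμ : ∀ i, IsDist (μ i)) :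
    ∑ x : ∀ i, α i, ∏ i, μ i (x i) = 1 := by
  rw [← Fintype.prod_sum]
  exact Finset.prod_eq_one fun i _ => (hμ i).2

lemma IsDist.iidLaw {𝓧 : Type*} [Fintype 𝓧] {P : 𝓧 → ℝ} (hP : IsDist P) (N : ℕ) :
    IsDist (iidLaw N P) :=
  ⟨fun _ => Finset.prod_nonneg fun _ _ => hP.1 _, sum_prod_eq_one fun _ => hP⟩

lemma sum_prod_iidLaw_mul_prod {N : ℕ} (P : ∀ i, α i → ℝ) (f : Fin N → (∀ i, α i) → ℝ) :
    ∑ x : ∀ i, Fin N → α i, (∏ i, iidLaw N (P i) (x i)) * ∏ j, f j (fun i => x i j) =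
      ∏ j, ∑ u : ∀ i, α i, (∏ i, P i (u i)) * f j u := by
  simp only [iidLaw, Fintype.prod_sum, Finset.prod_mul_distrib]
  refine Fintype.sum_equiv (Equiv.piComm fun i _ => α i) _ _ fun x => ?_
  rw [Finset.prod_comm]
  rfl

end ProductSums

section Merge

variable {K : ℕ} {𝓧 : Fin K → Type*}

lemma mergeS_mem (S : Finset (Fin K)) (xs : ∀ k : {k // k ∈ S}, 𝓧 k.1)
    (xb : ∀ k : {k // k ∉ S}, 𝓧 k.1) (k : {k // k ∈ S}) : mergeS S xs xb k.1 = xs k :=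
  dif_pos k.2

lemma mergeS_notMem (S : Finset (Fin K)) (xs : ∀ k : {k // k ∈ S}, 𝓧 k.1)
    (xb : ∀ k : {k // k ∉ S}, 𝓧 k.1) (k : {k // k ∉ S}) : mergeS S xs xb k.1 = xb k :=
  dif_neg k.2

lemma mergeS_restrict (S : Finset (Fin K)) (x : ∀ k, 𝓧 k) :
    mergeS S (fun k => x k.1) (fun k => x k.1) = x := by
  funext k
  simp [mergeS]

lemma mergeS_apply_letter {N : ℕ} (S : Finset (Fin K)) (xs : ∀ k : {k // k ∈ S}, Fin N → 𝓧 k.1)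
    (xb : ∀ k : {k // k ∉ S}, Fin N → 𝓧 k.1) (j : Fin N) :
    (fun k => mergeS (𝓧 := fun k => Fin N → 𝓧 k) S xs xb k j) =
      mergeS S (fun k => xs k j) (fun k => xb k j) := by
  funext k
  by_cases hk : k ∈ S <;> simp [mergeS, hk]

lemma prod_mergeS (S : Finset (Fin K)) (P : ∀ k, 𝓧 k → ℝ) (xs : ∀ k : {k // k ∈ S}, 𝓧 k.1)
    (xb : ∀ k : {k // k ∉ S}, 𝓧 k.1) :
    ∏ k, P k (mergeS S xs xb k) = (∏ k, P k.1 (xs k)) * ∏ k, P k.1 (xb k) := by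
  rw [← Fintype.prod_subtype_mul_prod_subtype (· ∈ S)]
  simp only [mergeS_mem, mergeS_notMem]
  congr!

lemma sum_prod_mul_eq_sum_mergeS [∀ k, Fintype (𝓧 k)] (S : Finset (Fin K))
    (P : ∀ k, 𝓧 k → ℝ) (g : (∀ k, 𝓧 k) → ℝ) :
    ∑ x, (∏ k, P k (x k)) * g x =
      ∑ xs : ∀ k : {k // k ∈ S}, 𝓧 k.1, (∏ k, P k.1 (xs k)) *
        ∑ xb : ∀ k : {k // k ∉ S}, 𝓧 k.1, (∏ k, P k.1 (xb k)) * g (mergeS S xs xb) := by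
  simp only [Finset.mul_sum]
  rw [← Fintype.sum_prod_type']
  refine Fintype.sum_equiv (Equiv.piEquivPiSubtypeProd (· ∈ S) 𝓧) _ _ fun x => ?_
  conv_lhs => rw [← mergeS_restrict S x, prod_mergeS, mul_assoc]
  rfl

lemma sum_prod_mul_compl [∀ k, Fintype (𝓧 k)] {P : ∀ k, 𝓧 k → ℝ} (hP : ∀ k, IsDist (P k))
    (S : Finset (Fin K)) (g : (∀ k : {k // k ∉ S}, 𝓧 k.1) → ℝ) :
    ∑ x : ∀ k, 𝓧 k, (∏ k, P k (x k)) * g (fun k => x k.1) =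
      ∑ xb : ∀ k : {k // k ∉ S}, 𝓧 k.1, (∏ k, P k.1 (xb k)) * g xb := by
  rw [sum_prod_mul_eq_sum_mergeS S P]
  simp only [mergeS_notMem, ← Finset.sum_mul]
  rw [sum_prod_eq_one fun k : {k // k ∈ S} => hP k.1, one_mul]

end Merge

section Moments

lemma WnK_nonneg {K : ℕ} {𝓧 : Fin K → Type*} {𝓨 : Type*} {W : (∀ k, 𝓧 k) → 𝓨 → ℝ}
    (hW : ∀ x y, 0 ≤ W x y) {N : ℕ} (x : ∀ k, Fin N → 𝓧 k) (y : Fin N → 𝓨) : 0 ≤ WnK W x y :=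
  Finset.prod_nonneg fun _ _ => hW _ _

lemma IsMAC.WnK {K : ℕ} {𝓧 : Fin K → Type*} {𝓨 : Type*} [Fintype 𝓨]
    {W : (∀ k, 𝓧 k) → 𝓨 → ℝ} (hW : IsMAC W) (N : ℕ) : IsMAC (WnK W (N := N)) :=
  ⟨WnK_nonneg hW.1, fun x => sum_prod_eq_one fun j => ⟨hW.1 _, hW.2 fun k => x k j⟩⟩

variable {K : ℕ} {𝓧 : Fin K → Type*} [∀ k, Fintype (𝓧 k)] {𝓨 : Type*}
  {W : (∀ k, 𝓧 k) → 𝓨 → ℝ} {P Q : ∀ k, 𝓧 k → ℝ}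

/-- The mean of the `b`-th power of the likelihood of `y` when the inputs in `S` are `xs` and those
outside `S` are drawn with law `Q`. -/
def complMoment (W : (∀ k, 𝓧 k) → 𝓨 → ℝ) (S : Finset (Fin K)) (Q : ∀ k, 𝓧 k → ℝ) (b : ℝ)
    (xs : ∀ k : {k // k ∈ S}, 𝓧 k.1) (y : 𝓨) : ℝ :=
  ∑ xb : ∀ k : {k // k ∉ S}, 𝓧 k.1, (∏ k, Q k.1 (xb k)) * W (mergeS S xs xb) y ^ b

lemma complMoment_nonneg (hW : ∀ x y, 0 ≤ W x y) (hQ : ∀ k x, 0 ≤ Q k x) (S : Finset (Fin K))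
    (b : ℝ) (xs : ∀ k : {k // k ∈ S}, 𝓧 k.1) (y : 𝓨) : 0 ≤ complMoment W S Q b xs y :=
  Finset.sum_nonneg fun _ _ => mul_nonneg (Finset.prod_nonneg fun _ _ => hQ _ _)
    (Real.rpow_nonneg (hW _ _) _)

lemma complMoment_WnK_iidLaw (hW : ∀ x y, 0 ≤ W x y) {N : ℕ} (S : Finset (Fin K)) (b : ℝ)
    (xs : ∀ k : {k // k ∈ S}, Fin N → 𝓧 k.1) (y : Fin N → 𝓨) :
    complMoment (WnK W) S (fun k => iidLaw N (Q k)) b xs y =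
      ∏ j, complMoment W S Q b (fun k => xs k j) (y j) := by
  have hpow (xb : ∀ k : {k // k ∉ S}, Fin N → 𝓧 k.1) : WnK W (mergeS S xs xb) y ^ b =
      ∏ j, W (mergeS S (fun k => xs k j) (fun k => xb k j)) (y j) ^ b := by
    simp only [WnK, mergeS_apply_letter]
    exact (Real.finsetProd_rpow _ _ (fun _ _ => hW _ _) _).symm
  simp only [complMoment, hpow]
  exact sum_prod_iidLaw_mul_prod (fun k : {k // k ∉ S} => Q k.1)
    fun j xb => W (mergeS S (fun k => xs k j) xb) (y j) ^ b

variable [Fintype 𝓨]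

/-- The common form of the sums in the two exponents. -/
def gallagerSum (W : (∀ k, 𝓧 k) → 𝓨 → ℝ) (S : Finset (Fin K)) (P Q : ∀ k, 𝓧 k → ℝ)
    (b₁ b₂ α β : ℝ) : ℝ :=
  ∑ y, ∑ xs : ∀ k : {k // k ∈ S}, 𝓧 k.1, (∏ k, P k.1 (xs k)) *
    (complMoment W S P b₁ xs y ^ α * complMoment W S Q b₂ xs y ^ β)

lemma GmK_eq_gallagerSum (W : (∀ k, 𝓧 k) → 𝓨 → ℝ) (S : Finset (Fin K)) (P Q : ∀ k, 𝓧 k → ℝ)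
    (ρ s : ℝ) : GmK W S P Q ρ s = gallagerSum W S P Q (1 - s) (s / ρ) 1 ρ := by
  simp only [GmK, gallagerSum, complMoment, Real.rpow_one]

lemma GiK_eq_gallagerSum (W : (∀ k, 𝓧 k) → 𝓨 → ℝ) (S : Finset (Fin K)) (P Q : ∀ k, 𝓧 k → ℝ)
    (ρ s : ℝ) : GiK W S P Q ρ s = gallagerSum W S P Q (s / (s + ρ)) 1 (s + ρ) (1 - s) := by
  simp only [GiK, gallagerSum, complMoment, Real.rpow_one]

lemma gallagerSum_nonneg (hW : ∀ x y, 0 ≤ W x y) (hP : ∀ k x, 0 ≤ P k x) (hQ : ∀ k x, 0 ≤ Q k x)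
    (S : Finset (Fin K)) (b₁ b₂ α β : ℝ) : 0 ≤ gallagerSum W S P Q b₁ b₂ α β :=
  Finset.sum_nonneg fun _ _ => Finset.sum_nonneg fun _ _ =>
    mul_nonneg (Finset.prod_nonneg fun _ _ => hP _ _)
      (mul_nonneg (Real.rpow_nonneg (complMoment_nonneg hW hP ..) _)
        (Real.rpow_nonneg (complMoment_nonneg hW hQ ..) _))

lemma GmK_nonneg (hW : ∀ x y, 0 ≤ W x y) (hP : ∀ k x, 0 ≤ P k x) (hQ : ∀ k x, 0 ≤ Q k x)
    (S : Finset (Fin K)) (ρ s : ℝ) : 0 ≤ GmK W S P Q ρ s :=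
  (GmK_eq_gallagerSum W S P Q ρ s).symm ▸ gallagerSum_nonneg hW hP hQ ..

lemma GiK_nonneg (hW : ∀ x y, 0 ≤ W x y) (hP : ∀ k x, 0 ≤ P k x) (hQ : ∀ k x, 0 ≤ Q k x)
    (S : Finset (Fin K)) (ρ s : ℝ) : 0 ≤ GiK W S P Q ρ s :=
  (GiK_eq_gallagerSum W S P Q ρ s).symm ▸ gallagerSum_nonneg hW hP hQ ..

lemma gallagerSum_WnK_iidLaw (hW : ∀ x y, 0 ≤ W x y) (hP : ∀ k x, 0 ≤ P k x)
    (hQ : ∀ k x, 0 ≤ Q k x) (N : ℕ) (S : Finset (Fin K)) (b₁ b₂ α β : ℝ) :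
    gallagerSum (WnK W (N := N)) S (fun k => iidLaw N (P k)) (fun k => iidLaw N (Q k)) b₁ b₂ α β =
      gallagerSum W S P Q b₁ b₂ α β ^ N := by
  have hpow (y : Fin N → 𝓨) (xs : ∀ k : {k // k ∈ S}, Fin N → 𝓧 k.1) :
      complMoment (WnK W) S (fun k => iidLaw N (P k)) b₁ xs y ^ α *
          complMoment (WnK W) S (fun k => iidLaw N (Q k)) b₂ xs y ^ β =
        ∏ j, complMoment W S P b₁ (fun k => xs k j) (y j) ^ α *
          complMoment W S Q b₂ (fun k => xs k j) (y j) ^ β := by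
    rw [complMoment_WnK_iidLaw hW, complMoment_WnK_iidLaw hW, Finset.prod_mul_distrib,
      Real.finsetProd_rpow _ _ fun _ _ => complMoment_nonneg hW hP ..,
      Real.finsetProd_rpow _ _ fun _ _ => complMoment_nonneg hW hQ ..]
  have hletters (y : Fin N → 𝓨) := sum_prod_iidLaw_mul_prod (fun k : {k // k ∈ S} => P k.1)
    fun j xs => complMoment W S P b₁ xs (y j) ^ α * complMoment W S Q b₂ xs (y j) ^ β
  simp only [gallagerSum, hpow, hletters]
  rw [← Fintype.prod_sum fun (_ : Fin N) y => ∑ xs : ∀ k : {k // k ∈ S}, 𝓧 k.1,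
    (∏ k, P k.1 (xs k)) * (complMoment W S P b₁ xs y ^ α * complMoment W S Q b₂ xs y ^ β)]
  simp only [Finset.prod_const, Finset.card_univ, Fintype.card_fin]

lemma GmK_WnK_iidLaw (hW : ∀ x y, 0 ≤ W x y) (hP : ∀ k x, 0 ≤ P k x) (hQ : ∀ k x, 0 ≤ Q k x)
    (N : ℕ) (S : Finset (Fin K)) (ρ s : ℝ) :
    GmK (WnK W (N := N)) S (fun k => iidLaw N (P k)) (fun k => iidLaw N (Q k)) ρ s =
      GmK W S P Q ρ s ^ N := by
  simp only [GmK_eq_gallagerSum, gallagerSum_WnK_iidLaw hW hP hQ]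

lemma GiK_WnK_iidLaw (hW : ∀ x y, 0 ≤ W x y) (hP : ∀ k x, 0 ≤ P k x) (hQ : ∀ k x, 0 ≤ Q k x)
    (N : ℕ) (S : Finset (Fin K)) (ρ s : ℝ) :
    GiK (WnK W (N := N)) S (fun k => iidLaw N (P k)) (fun k => iidLaw N (Q k)) ρ s =
      GiK W S P Q ρ s ^ N := by
  simp only [GiK_eq_gallagerSum, gallagerSum_WnK_iidLaw hW hP hQ]

end Moments

section WeightedSums

lemma min_one_le_rpow {u ρ : ℝ} (hu : 0 ≤ u) (hρ : ρ ∈ Set.Icc (0 : ℝ) 1) : min 1 u ≤ u ^ ρ := by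
  rcases le_total u 1 with h | h
  · exact (min_le_right 1 u).trans
      (by simpa using Real.rpow_le_rpow_of_exponent_ge' hu h hρ.1 hρ.2)
  · exact (min_le_left 1 u).trans (Real.one_le_rpow h hρ.1)

variable {β : Type*} [Fintype β] {q v : β → ℝ} {T : β → Prop}

lemma sum_mul_ite_le_sum_div {g : β → ℝ} {t : ℝ} (hq : ∀ b, 0 ≤ q b) (hg : ∀ b, 0 ≤ g b)
    (ht : 0 < t) (hT : ∀ b, T b → t ≤ g b) :
    ∑ b, q b * (if T b then 1 else 0) ≤ (∑ b, q b * g b) / t := by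
  simp only [Finset.sum_div, mul_div_assoc]
  refine Finset.sum_le_sum fun b _ => mul_le_mul_of_nonneg_left ?_ (hq b)
  split_ifs with h
  · exact (one_le_div ht).2 (hT b h)
  · exact div_nonneg (hg b) ht.le

lemma mul_min_one_le_of_imp_le {m w ρ s : ℝ} (hq : ∀ b, 0 ≤ q b) (hv : ∀ b, 0 ≤ v b)
    (hw : 0 ≤ w) (hm : 0 ≤ m) (hρ : ρ ∈ Set.Ioc (0 : ℝ) 1) (hs : 0 < s)
    (hT : ∀ b, T b → w ≤ v b) :
    w * min 1 (m * ∑ b, q b * (if T b then 1 else 0)) ≤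
      m ^ ρ * (w ^ (1 - s) * (∑ b, q b * v b ^ (s / ρ)) ^ ρ) := by
  have hsρ : 0 < s / ρ := div_pos hs hρ.1
  set A := ∑ b, q b * v b ^ (s / ρ)
  have hA0 : 0 ≤ A := Finset.sum_nonneg fun b _ => mul_nonneg (hq b) (Real.rpow_nonneg (hv b) _)
  have hsum0 : 0 ≤ ∑ b, q b * (if T b then (1 : ℝ) else 0) :=
    Finset.sum_nonneg fun b _ => mul_nonneg (hq b) (by positivity)
  rcases hw.eq_or_lt with rfl | hw
  · rw [zero_mul]
    positivity
  have hmarkov : ∑ b, q b * (if T b then (1 : ℝ) else 0) ≤ A / w ^ (s / ρ) :=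
    sum_mul_ite_le_sum_div hq (fun b => Real.rpow_nonneg (hv b) _) (Real.rpow_pos_of_pos hw _)
      fun b hb => Real.rpow_le_rpow hw.le (hT b hb) hsρ.le
  calc w * min 1 (m * ∑ b, q b * (if T b then 1 else 0))
      ≤ w * (m * ∑ b, q b * (if T b then 1 else 0)) ^ ρ := by
        gcongr
        exact min_one_le_rpow (mul_nonneg hm hsum0) ⟨hρ.1.le, hρ.2⟩
    _ ≤ w * (m * (A / w ^ (s / ρ))) ^ ρ := by
        have := hρ.1.le
        gcongr
    _ = m ^ ρ * (w ^ (1 - s) * A ^ ρ) := by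
        rw [Real.mul_rpow hm (by positivity), Real.div_rpow hA0 (by positivity),
          ← Real.rpow_mul hw.le, div_mul_cancel₀ _ hρ.1.ne', Real.rpow_sub hw, Real.rpow_one]
        ring

lemma sum_mul_ite_not_le {B a b' : ℝ} (hq : ∀ b, 0 ≤ q b) (hv : ∀ b, 0 ≤ v b) (hB : 0 ≤ B)
    (hab : a + b' = 1) (hT : ∀ b, ¬ T b → (∑ c, q c * v c ^ b') * v b ^ a ≤ B) :
    ∑ b, q b * (v b * if ¬ T b then 1 else 0) ≤ B := by
  set F := ∑ c, q c * v c ^ b'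
  have hterm0 (b) : 0 ≤ q b * v b ^ b' := mul_nonneg (hq b) (Real.rpow_nonneg (hv b) _)
  rcases (Finset.sum_nonneg fun b _ => hterm0 b : 0 ≤ F).eq_or_lt with hF0 | hF0
  · have hqv (b) : q b * v b = 0 := by
      have := (Finset.sum_eq_zero_iff_of_nonneg fun b _ => hterm0 b).1 hF0.symm b
        (Finset.mem_univ b)
      rcases mul_eq_zero.1 this with h | h
      · rw [h, zero_mul]
      · rw [((Real.rpow_eq_zero_iff_of_nonneg (hv b)).1 h).1, mul_zero]
    simpa only [← mul_assoc, hqv, zero_mul, Finset.sum_const_zero]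
  refine le_of_mul_le_mul_left ?_ hF0
  calc F * ∑ b, q b * (v b * if ¬ T b then 1 else 0)
      = ∑ b, q b * v b ^ b' * (F * v b ^ a * if ¬ T b then 1 else 0) := by
        rw [Finset.mul_sum]
        refine Finset.sum_congr rfl fun b _ => ?_
        have hvb : v b = v b ^ a * v b ^ b' := by
          rw [← Real.rpow_add' (hv b) (by rw [hab]; exact one_ne_zero), hab, Real.rpow_one]
        nth_rw 1 [hvb]
        ring
    _ ≤ ∑ b, q b * v b ^ b' * B := by
        refine Finset.sum_le_sum fun b _ => mul_le_mul_of_nonneg_left ?_ (hterm0 b)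
        split_ifs with h
        · rwa [mul_zero]
        · rw [mul_one]
          exact hT b h
    _ = F * B := (Finset.sum_mul ..).symm

-- `B / F` is the threshold at which the Markov bound on false acceptance, raised to the power
-- `ρ / (1 - s)`, equals the bound `B` on false rejection.
lemma mul_markov_rpow_eq {m F V ρ s : ℝ} (hm : 0 < m) (hF : 0 < F) (hV : 0 < V) (hρ : 0 < ρ)
    (hs : 0 < 1 - s) :
    let B := m ^ ρ * (F ^ (s + ρ) * V ^ (1 - s))
    V * (m * (F / (B / F) ^ (s / ρ))) ^ (ρ / (1 - s)) = B := by
  intro B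
  have hB : 0 < B := by positivity
  have hlogB : Real.log B = ρ * Real.log m + ((s + ρ) * Real.log F + (1 - s) * Real.log V) := by
    rw [Real.log_mul (by positivity) (by positivity),
      Real.log_mul (by positivity) (by positivity), Real.log_rpow hm, Real.log_rpow hF,
      Real.log_rpow hV]
  refine Real.log_injOn_pos (Set.mem_Ioi.2 (by positivity)) hB ?_
  rw [Real.log_mul hV.ne' (by positivity), Real.log_rpow (by positivity),
    Real.log_mul hm.ne' (by positivity), Real.log_div hF.ne' (by positivity),
    Real.log_rpow (by positivity), Real.log_div hB.ne' hF.ne', hlogB]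
  field_simp
  ring

lemma mul_min_one_le_of_threshold {m V ρ s : ℝ} (hq : ∀ b, 0 ≤ q b) (hv : ∀ b, 0 ≤ v b)
    (hV : 0 ≤ V) (hm : 0 < m) (hρ : 0 < ρ) (hs : s ∈ Set.Ioc (0 : ℝ) (1 - ρ))
    (hT : ∀ b, T b → m ^ ρ * ((∑ c, q c * v c ^ (s / (s + ρ))) ^ (s + ρ) * V ^ (1 - s)) <
      (∑ c, q c * v c ^ (s / (s + ρ))) * v b ^ (ρ / (s + ρ))) :
    V * min 1 (m * ∑ b, q b * (if T b then 1 else 0)) ≤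
      m ^ ρ * ((∑ b, q b * v b ^ (s / (s + ρ))) ^ (s + ρ) * V ^ (1 - s)) := by
  obtain ⟨hs, hsρ⟩ := hs
  set F := ∑ c, q c * v c ^ (s / (s + ρ))
  set B := m ^ ρ * (F ^ (s + ρ) * V ^ (1 - s))
  have hF0 : 0 ≤ F := Finset.sum_nonneg fun b _ => mul_nonneg (hq b) (Real.rpow_nonneg (hv b) _)
  have hB0 : 0 ≤ B := by positivity
  have hsum0 : 0 ≤ ∑ b, q b * (if T b then (1 : ℝ) else 0) :=
    Finset.sum_nonneg fun b _ => mul_nonneg (hq b) (by positivity)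
  rcases hV.eq_or_lt with hV | hV
  · rwa [← hV, zero_mul]
  rcases hF0.eq_or_lt with hF0 | hF0
  · have hnot (b) : ¬ T b := fun hb => (hT b hb).not_ge (by rwa [← hF0, zero_mul])
    simpa only [hnot, if_false, mul_zero, Finset.sum_const_zero, min_eq_right zero_le_one]
  have : 0 < B := by positivity
  have hs1 : 0 < 1 - s := by linarith
  have hmarkov : ∑ b, q b * (if T b then (1 : ℝ) else 0) ≤ F / (B / F) ^ (s / ρ) := by
    refine sum_mul_ite_le_sum_div hq (fun b => Real.rpow_nonneg (hv b) _) (by positivity)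
      fun b hb => ?_
    calc (B / F) ^ (s / ρ) ≤ (v b ^ (ρ / (s + ρ))) ^ (s / ρ) := by
          gcongr
          exact (div_le_iff₀' hF0).2 (hT b hb).le
      _ = v b ^ (s / (s + ρ)) := by
          rw [← Real.rpow_mul (hv b)]
          congr 1
          field_simp
  calc V * min 1 (m * ∑ b, q b * (if T b then 1 else 0))
      ≤ V * (m * ∑ b, q b * (if T b then 1 else 0)) ^ (ρ / (1 - s)) := by
        gcongr
        exact min_one_le_rpow (mul_nonneg hm.le hsum0)
          ⟨div_nonneg hρ.le hs1.le, (div_le_one hs1).2 (by linarith)⟩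
    _ ≤ V * (m * (F / (B / F) ^ (s / ρ))) ^ (ρ / (1 - s)) := by gcongr
    _ = B := mul_markov_rpow_eq hm hF0 hV hρ hs1

end WeightedSums

section OneShot

variable {K : ℕ} {𝓧 : Fin K → Type*} [∀ k, Fintype (𝓧 k)] {𝓨 : Type*}

/-- The test declaring the inputs `x` plausible: it compares `W x y` with a threshold depending on
the inputs in `S` only. Dividing by the first moment would give the threshold itself; this form
needs no convention when a moment vanishes. -/
def collisionTest (W : (∀ k, 𝓧 k) → 𝓨 → ℝ) (S : Finset (Fin K)) (P Q : ∀ k, 𝓧 k → ℝ)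
    (m ρ s : ℝ) (x : ∀ k, 𝓧 k) (y : 𝓨) : Prop :=
  m ^ ρ * (complMoment W S P (s / (s + ρ)) (fun k => x k.1) y ^ (s + ρ) *
      complMoment W S Q 1 (fun k => x k.1) y ^ (1 - s)) <
    complMoment W S P (s / (s + ρ)) (fun k => x k.1) y * W x y ^ (ρ / (s + ρ))

lemma collisionTest_mergeS (W : (∀ k, 𝓧 k) → 𝓨 → ℝ) (S : Finset (Fin K)) (P Q : ∀ k, 𝓧 k → ℝ)
    (m ρ s : ℝ) (xs : ∀ k : {k // k ∈ S}, 𝓧 k.1) (xb : ∀ k : {k // k ∉ S}, 𝓧 k.1) (y : 𝓨) :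
    collisionTest W S P Q m ρ s (mergeS S xs xb) y ↔
      m ^ ρ * (complMoment W S P (s / (s + ρ)) xs y ^ (s + ρ) *
          complMoment W S Q 1 xs y ^ (1 - s)) <
        complMoment W S P (s / (s + ρ)) xs y * W (mergeS S xs xb) y ^ (ρ / (s + ρ)) := by
  simp only [collisionTest, mergeS_mem]

variable [Fintype 𝓨] {W : (∀ k, 𝓧 k) → 𝓨 → ℝ} {P Q : ∀ k, 𝓧 k → ℝ} {S : Finset (Fin K)}
  {m ρ s : ℝ}

/-- The union bound, clipped at `1`, for the probability that some of `m` competitors, which share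
the inputs in `S` with the transmitted word and draw the others with law `Q`, stands in the relation
`T` to it. -/
def confusionBound (W : (∀ k, 𝓧 k) → 𝓨 → ℝ) (S : Finset (Fin K)) (P Q : ∀ k, 𝓧 k → ℝ) (m : ℝ)
    (T : (∀ k, 𝓧 k) → (∀ k, 𝓧 k) → 𝓨 → Prop) : ℝ :=
  ∑ y, ∑ x : ∀ k, 𝓧 k, (∏ k, P k (x k)) * (W x y * min 1 (m *
    ∑ xb : ∀ k : {k // k ∉ S}, 𝓧 k.1,
      (∏ k, Q k.1 (xb k)) * if T x (mergeS S (fun k => x k.1) xb) y then 1 else 0))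

lemma confusionBound_likelihood_le (hW : ∀ x y, 0 ≤ W x y) (hP : ∀ k x, 0 ≤ P k x)
    (hQ : ∀ k x, 0 ≤ Q k x) (hm : 0 ≤ m) (hρ : ρ ∈ Set.Ioc (0 : ℝ) 1) (hs : 0 < s) :
    confusionBound W S P Q m (fun x x' y => W x y ≤ W x' y) ≤ m ^ ρ * GmK W S P Q ρ s := by
  rw [GmK, Finset.mul_sum]
  refine Finset.sum_le_sum fun y _ => ?_
  calc ∑ x : ∀ k, 𝓧 k, (∏ k, P k (x k)) * (W x y * min 1 (m *
        ∑ xb : ∀ k : {k // k ∉ S}, 𝓧 k.1, (∏ k, Q k.1 (xb k)) *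
          if W x y ≤ W (mergeS S (fun k => x k.1) xb) y then 1 else 0))
      ≤ ∑ x : ∀ k, 𝓧 k, (∏ k, P k (x k)) * (m ^ ρ * (W x y ^ (1 - s) *
          complMoment W S Q (s / ρ) (fun k => x k.1) y ^ ρ)) :=
        Finset.sum_le_sum fun x _ => mul_le_mul_of_nonneg_left
          (mul_min_one_le_of_imp_le (fun _ => Finset.prod_nonneg fun _ _ => hQ _ _)
            (fun _ => hW _ _) (hW x y) hm hρ hs fun _ h => h)
          (Finset.prod_nonneg fun _ _ => hP _ _)
    _ = _ := by
        rw [sum_prod_mul_eq_sum_mergeS S P, Finset.mul_sum]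
        refine Finset.sum_congr rfl fun xs _ => ?_
        simp only [mergeS_mem, complMoment, Finset.sum_mul, Finset.mul_sum]
        refine Finset.sum_congr rfl fun xb _ => ?_
        ring

lemma sum_not_collisionTest_le (hW : ∀ x y, 0 ≤ W x y) (hP : ∀ k x, 0 ≤ P k x)
    (hQ : ∀ k x, 0 ≤ Q k x) (hm : 0 ≤ m) (hρ : 0 < ρ) (hs : 0 < s) :
    ∑ y, ∑ x : ∀ k, 𝓧 k, (∏ k, P k (x k)) *
        (W x y * if ¬ collisionTest W S P Q m ρ s x y then 1 else 0) ≤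
      m ^ ρ * GiK W S P Q ρ s := by
  rw [GiK_eq_gallagerSum, gallagerSum, Finset.mul_sum]
  refine Finset.sum_le_sum fun y _ => ?_
  rw [sum_prod_mul_eq_sum_mergeS S P, Finset.mul_sum]
  refine Finset.sum_le_sum fun xs _ => ?_
  rw [mul_left_comm]
  refine mul_le_mul_of_nonneg_left ?_ (Finset.prod_nonneg fun _ _ => hP _ _)
  refine sum_mul_ite_not_le (a := ρ / (s + ρ)) (b' := s / (s + ρ))
    (fun _ => Finset.prod_nonneg fun _ _ => hP _ _) (fun _ => hW _ _) ?_ ?_ fun xb hxb => ?_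
  · exact mul_nonneg (Real.rpow_nonneg hm _) (mul_nonneg
      (Real.rpow_nonneg (complMoment_nonneg hW hP ..) _)
      (Real.rpow_nonneg (complMoment_nonneg hW hQ ..) _))
  · field_simp
    ring
  · exact not_lt.1 (mt (collisionTest_mergeS ..).2 hxb)

lemma confusionBound_collisionTest_le (hW : ∀ x y, 0 ≤ W x y) (hP : ∀ k x, 0 ≤ P k x)
    (hQ : ∀ k x, 0 ≤ Q k x) (hPQ : ∀ k ∈ S, P k = Q k) (hm : 0 < m) (hρ : 0 < ρ)
    (hs : s ∈ Set.Ioc (0 : ℝ) (1 - ρ)) :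
    confusionBound W S Q P m (fun _ x' y => collisionTest W S P Q m ρ s x' y) ≤
      m ^ ρ * GiK W S P Q ρ s := by
  rw [GiK_eq_gallagerSum, gallagerSum, Finset.mul_sum]
  refine Finset.sum_le_sum fun y _ => ?_
  rw [sum_prod_mul_eq_sum_mergeS S Q, Finset.mul_sum]
  refine Finset.sum_le_sum fun xs _ => ?_
  have hprod : ∏ k : {k // k ∈ S}, Q k.1 (xs k) = ∏ k : {k // k ∈ S}, P k.1 (xs k) :=
    Finset.prod_congr rfl fun k _ => by rw [hPQ k.1 k.2]
  rw [mul_left_comm, hprod]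
  refine mul_le_mul_of_nonneg_left ?_ (Finset.prod_nonneg fun _ _ => hP _ _)
  simp only [mergeS_mem, ← mul_assoc, ← Finset.sum_mul]
  have hV : ∑ xb : ∀ k : {k // k ∉ S}, 𝓧 k.1, (∏ k, Q k.1 (xb k)) * W (mergeS S xs xb) y =
      complMoment W S Q 1 xs y := by
    simp only [complMoment, Real.rpow_one]
  rw [hV, mul_assoc (m ^ ρ)]
  refine mul_min_one_le_of_threshold (fun _ => Finset.prod_nonneg fun _ _ => hP _ _)
    (fun _ => hW _ _) (complMoment_nonneg hW hQ ..) hm hρ hs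
    fun xb hxb => (collisionTest_mergeS ..).1 hxb

end OneShot

section Codebook

variable {K M : ℕ} {𝓧 : Fin K → Type*} {N : ℕ} {rate : Fin K → Fin M → ℝ}

/-- The codebooks `c` with the codewords of the message-and-rate vector pair `p` replaced by `x`. -/
def setCw (p : MsgK N rate) (x : ∀ k, Fin N → 𝓧 k) (c : CbkK 𝓧 N rate) : CbkK 𝓧 N rate :=
  fun k i w => if p k = ⟨i, w⟩ then x k else c k i w

/-- The users to which `p` and `p'` assign the same rate and message, hence the same codeword. -/
def agreeSet (p p' : MsgK N rate) : Finset (Fin K) :=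
  Finset.univ.filter fun k => p k = p' k

/-- The laws of the codewords of the users at the rate vector `r`. -/
abbrev wordLaw (N : ℕ) (Pd : ∀ k, Fin M → 𝓧 k → ℝ) (r : Fin K → Fin M) (k : Fin K) :
    (Fin N → 𝓧 k) → ℝ :=
  iidLaw N (Pd k (r k))

lemma rv_eq_of_mem_agreeSet {p p' : MsgK N rate} {k : Fin K} (hk : k ∈ agreeSet p p') :
    rv p k = rv p' k :=
  congrArg Sigma.fst (Finset.mem_filter.1 hk).2

lemma cw_setCw (p p' : MsgK N rate) (x : ∀ k, Fin N → 𝓧 k) (c : CbkK 𝓧 N rate) :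
    cw (setCw p x c) p' = mergeS (agreeSet p p') (fun k => x k.1) (fun k => cw c p' k.1) := by
  funext k
  by_cases hk : p k = p' k <;> simp [cw, setCw, mergeS, agreeSet, hk]

lemma cw_setCw_self (p : MsgK N rate) (x : ∀ k, Fin N → 𝓧 k) (c : CbkK 𝓧 N rate) :
    cw (setCw p x c) p = x := by
  funext k
  simp [cw, setCw]

lemma setCw_cw_setCw (p : MsgK N rate) (x : ∀ k, Fin N → 𝓧 k) (c : CbkK 𝓧 N rate) :
    setCw p (cw c p) (setCw p x c) = c := by
  funext k i w
  by_cases hk : p k = ⟨i, w⟩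
  · rw [setCw, if_pos hk, cw, hk]
  · rw [setCw, if_neg hk, setCw, if_neg hk]

variable [∀ k, Fintype (𝓧 k)] {Pd : ∀ k, Fin M → 𝓧 k → ℝ}

lemma wordLaw_nonneg (hPd : ∀ k i, IsDist (Pd k i)) (N : ℕ) (r : Fin K → Fin M) (k : Fin K)
    (v : Fin N → 𝓧 k) : 0 ≤ wordLaw N Pd r k v :=
  ((hPd k (r k)).iidLaw N).1 v

lemma cbkProbK_nonneg (hPd : ∀ k i, IsDist (Pd k i)) (c : CbkK 𝓧 N rate) :
    0 ≤ cbkProbK rate Pd c :=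
  Finset.prod_nonneg fun k _ => Finset.prod_nonneg fun i _ => Finset.prod_nonneg fun _ _ =>
    ((hPd k i).iidLaw N).1 _

lemma sum_cbkProbK (hPd : ∀ k i, IsDist (Pd k i)) :
    ∑ c : CbkK 𝓧 N rate, cbkProbK rate Pd c = 1 := by
  have hbook (k : Fin K) : IsDist fun b : ∀ i, Fin (numMsgK N rate k i) → Fin N → 𝓧 k =>
      ∏ i, ∏ w, iidLaw N (Pd k i) (b i w) :=
    ⟨fun b => Finset.prod_nonneg fun i _ => Finset.prod_nonneg fun _ _ =>
        ((hPd k i).iidLaw N).1 _,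
      sum_prod_eq_one fun i => ⟨fun b => Finset.prod_nonneg fun _ _ =>
        ((hPd k i).iidLaw N).1 _, sum_prod_eq_one fun _ => (hPd k i).iidLaw N⟩⟩
  exact sum_prod_eq_one hbook

lemma cbkProbK_setCw_mul (p : MsgK N rate) (x : ∀ k, Fin N → 𝓧 k) (c : CbkK 𝓧 N rate) :
    cbkProbK rate Pd (setCw p x c) * ∏ k, wordLaw N Pd (rv p) k (cw c p k) =
      cbkProbK rate Pd c * ∏ k, wordLaw N Pd (rv p) k (x k) := by
  have hsplit (d : CbkK 𝓧 N rate) (k : Fin K) :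
      ∏ i, ∏ w, iidLaw N (Pd k i) (d k i w) = wordLaw N Pd (rv p) k (cw d p k) *
        ∏ z ∈ Finset.univ.erase (p k), iidLaw N (Pd k z.1) (d k z.1 z.2) := by
    rw [← Fintype.prod_sigma' fun i w => iidLaw N (Pd k i) (d k i w)]
    exact (Finset.mul_prod_erase _ _ (Finset.mem_univ (p k))).symm
  have hrest (k : Fin K) : ∏ z ∈ Finset.univ.erase (p k),
        iidLaw N (Pd k z.1) (setCw p x c k z.1 z.2) =
      ∏ z ∈ Finset.univ.erase (p k), iidLaw N (Pd k z.1) (c k z.1 z.2) :=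
    Finset.prod_congr rfl fun z hz => by
      rw [setCw, if_neg (Finset.ne_of_mem_erase hz).symm]
  change (∏ k, ∏ i, ∏ w, iidLaw N (Pd k i) (setCw p x c k i w)) * _ =
    (∏ k, ∏ i, ∏ w, iidLaw N (Pd k i) (c k i w)) * _
  simp only [hsplit, hrest, cw_setCw_self, Finset.prod_mul_distrib]
  ring

lemma sum_cbkProbK_mul_eq_sum_setCw (hPd : ∀ k i, IsDist (Pd k i)) (p : MsgK N rate)
    (H : CbkK 𝓧 N rate → ℝ) :
    ∑ c, cbkProbK rate Pd c * H c =
      ∑ x : ∀ k, Fin N → 𝓧 k, (∏ k, wordLaw N Pd (rv p) k (x k)) *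
        ∑ c, cbkProbK rate Pd c * H (setCw p x c) := by
  have hinv : Function.Involutive fun z : (∀ k, Fin N → 𝓧 k) × CbkK 𝓧 N rate =>
      (cw z.2 p, setCw p z.1 z.2) := fun z =>
    Prod.ext (cw_setCw_self p z.1 z.2) (setCw_cw_setCw p z.1 z.2)
  calc ∑ c, cbkProbK rate Pd c * H c
      = ∑ x : ∀ k, Fin N → 𝓧 k, (∏ k, wordLaw N Pd (rv p) k (x k)) *
          ∑ c, cbkProbK rate Pd c * H c := by
        rw [← Finset.sum_mul, sum_prod_eq_one fun k => (hPd k _).iidLaw N, one_mul]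
    _ = _ := by
        simp only [Finset.mul_sum]
        rw [← Fintype.sum_prod_type', ← Fintype.sum_prod_type']
        refine (Fintype.sum_bijective _ hinv.bijective _ _ fun z => ?_).symm
        have := cbkProbK_setCw_mul (Pd := Pd) p z.1 z.2
        linear_combination -H (setCw p z.1 z.2) * this

lemma sum_cbkProbK_mul_cw (hPd : ∀ k i, IsDist (Pd k i)) (p : MsgK N rate)
    (f : (∀ k, Fin N → 𝓧 k) → ℝ) :
    ∑ c, cbkProbK rate Pd c * f (cw c p) =
      ∑ x : ∀ k, Fin N → 𝓧 k, (∏ k, wordLaw N Pd (rv p) k (x k)) * f x := by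
  rw [sum_cbkProbK_mul_eq_sum_setCw hPd p]
  simp only [cw_setCw_self, ← Finset.sum_mul, sum_cbkProbK hPd, one_mul]

lemma sum_cbkProbK_mul_cw_compl (hPd : ∀ k i, IsDist (Pd k i)) (p : MsgK N rate)
    (S : Finset (Fin K)) (f : (∀ k : {k // k ∉ S}, Fin N → 𝓧 k.1) → ℝ) :
    ∑ c, cbkProbK rate Pd c * f (fun k => cw c p k.1) =
      ∑ xb : ∀ k : {k // k ∉ S}, Fin N → 𝓧 k.1,
        (∏ k, wordLaw N Pd (rv p) k.1 (xb k)) * f xb := by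
  rw [sum_cbkProbK_mul_cw hPd p fun x => f fun k => x k.1]
  exact sum_prod_mul_compl (fun k => (hPd k _).iidLaw N) S f

lemma sum_cbkProbK_mul_cw_cw (hPd : ∀ k i, IsDist (Pd k i)) (p p' : MsgK N rate)
    (f : (∀ k, Fin N → 𝓧 k) → (∀ k, Fin N → 𝓧 k) → ℝ) :
    ∑ c, cbkProbK rate Pd c * f (cw c p) (cw c p') =
      ∑ x : ∀ k, Fin N → 𝓧 k, (∏ k, wordLaw N Pd (rv p) k (x k)) *
        ∑ xb : ∀ k : {k // k ∉ agreeSet p p'}, Fin N → 𝓧 k.1,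
          (∏ k, wordLaw N Pd (rv p') k.1 (xb k)) *
            f x (mergeS (agreeSet p p') (fun k => x k.1) xb) := by
  rw [sum_cbkProbK_mul_eq_sum_setCw hPd p]
  refine Finset.sum_congr rfl fun x _ => congrArg _ ?_
  simp only [cw_setCw_self, cw_setCw]
  exact sum_cbkProbK_mul_cw_compl hPd p' _ fun xb => f x (mergeS _ (fun k => x k.1) xb)

end Codebook

section ErrorEvents

lemma ite_le_sum_ite {ι : Type*} {I : Finset ι} {E : Prop} {F : ι → Prop}
    (h : E → ∃ i ∈ I, F i) :
    (if E then 1 else 0 : ℝ) ≤ ∑ i ∈ I, if F i then 1 else 0 := by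
  have hnonneg : ∀ i ∈ I, (0 : ℝ) ≤ if F i then 1 else 0 := fun i _ => by positivity
  split_ifs with hE
  · obtain ⟨i, hi, hF⟩ := h hE
    exact (if_pos hF).ge.trans (Finset.single_le_sum hnonneg hi)
  · exact Finset.sum_nonneg hnonneg

variable {K M : ℕ} {𝓧 : Fin K → Type*} {𝓨 : Type*} {N : ℕ} {rate : Fin K → Fin M → ℝ}

/-- Some message at the rate vector `r'`, which agrees with `p` exactly on `S`, has codewords
standing in the relation `T` to those of `p`. -/
def Confused (p : MsgK N rate) (S : Finset (Fin K)) (r' : Fin K → Fin M)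
    (T : (∀ k, Fin N → 𝓧 k) → (∀ k, Fin N → 𝓧 k) → (Fin N → 𝓨) → Prop)
    (c : CbkK 𝓧 N rate) (y : Fin N → 𝓨) : Prop :=
  ∃ p', (agreeSet p p' = S ∧ rv p' = r') ∧ T (cw c p) (cw c p') y

lemma card_agreeSet_eq_le (p : MsgK N rate) (S : Finset (Fin K)) (r' : Fin K → Fin M) :
    ((Finset.univ.filter fun p' : MsgK N rate => agreeSet p p' = S ∧ rv p' = r').card : ℝ) ≤
      Real.exp (N * ∑ k ∈ Sᶜ, rate k (r' k)) := by
  let t (k : Fin K) : Finset ((i : Fin M) × Fin (numMsgK N rate k i)) :=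
    if k ∈ S then {p k} else Finset.univ.image (Sigma.mk (r' k))
  have hsub : (Finset.univ.filter fun p' : MsgK N rate => agreeSet p p' = S ∧ rv p' = r') ⊆
      Fintype.piFinset t := by
    intro p' hp'
    obtain ⟨rfl, rfl⟩ := (Finset.mem_filter.1 hp').2
    refine Fintype.mem_piFinset.2 fun k => ?_
    by_cases hk : k ∈ agreeSet p p'
    · simp only [t, if_pos hk, Finset.mem_singleton, (Finset.mem_filter.1 hk).2]
    · simp only [t, if_neg hk, Finset.mem_image, Finset.mem_univ, true_and]
      exact ⟨(p' k).2, rfl⟩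
  have hcard (k : Fin K) :
      ((t k).card : ℝ) ≤ if k ∈ S then 1 else Real.exp (N * rate k (r' k)) := by
    by_cases hk : k ∈ S
    · simp only [t, if_pos hk, Finset.card_singleton, Nat.cast_one, le_refl]
    · simp only [t, if_neg hk]
      have himage : (Finset.univ.image (Sigma.mk (β := fun i => Fin (numMsgK N rate k i))
          (r' k))).card ≤ numMsgK N rate k (r' k) :=
        Finset.card_image_le.trans (Finset.card_fin _).le
      exact (Nat.cast_le.2 himage).trans (Nat.floor_le (Real.exp_pos _).le)
  calc _ ≤ ((∏ k, (t k).card : ℕ) : ℝ) := by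
        rw [← Fintype.card_piFinset]
        exact_mod_cast Finset.card_le_card hsub
    _ ≤ ∏ k, if k ∈ S then 1 else Real.exp (N * rate k (r' k)) := by
        push_cast
        exact Finset.prod_le_prod (fun _ _ => Nat.cast_nonneg _) fun k _ => hcard k
    _ = Real.exp (N * ∑ k ∈ Sᶜ, rate k (r' k)) := by
        rw [Finset.mul_sum, Real.exp_sum, Finset.prod_ite, Finset.prod_const_one, one_mul]
        exact Finset.prod_congr (by ext; simp) fun _ _ => rfl

variable [∀ k, Fintype (𝓧 k)] {Pd : ∀ k, Fin M → 𝓧 k → ℝ}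

lemma sum_cbkProbK_confused_le (hPd : ∀ k i, IsDist (Pd k i)) (p : MsgK N rate)
    (S : Finset (Fin K)) (r' : Fin K → Fin M)
    (T : (∀ k, Fin N → 𝓧 k) → (∀ k, Fin N → 𝓧 k) → (Fin N → 𝓨) → Prop)
    (x : ∀ k, Fin N → 𝓧 k) (y : Fin N → 𝓨) :
    ∑ c, cbkProbK rate Pd c * (if Confused p S r' T (setCw p x c) y then 1 else 0) ≤
      min 1 (Real.exp (N * ∑ k ∈ Sᶜ, rate k (r' k)) *
        ∑ xb : ∀ k : {k // k ∉ S}, Fin N → 𝓧 k.1, (∏ k, wordLaw N Pd r' k.1 (xb k)) *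
          if T x (mergeS S (fun k => x k.1) xb) y then 1 else 0) := by
  let A := Finset.univ.filter fun p' : MsgK N rate => agreeSet p p' = S ∧ rv p' = r'
  have hunion (c : CbkK 𝓧 N rate) : (if Confused p S r' T (setCw p x c) y then 1 else 0 : ℝ) ≤
      ∑ p' ∈ A, if T x (mergeS S (fun k => x k.1) fun k => cw c p' k.1) y then 1 else 0 := by
    refine ite_le_sum_ite ?_
    rintro ⟨p', ⟨rfl, hr'⟩, hT⟩
    rw [cw_setCw_self, cw_setCw] at hT
    exact ⟨p', Finset.mem_filter.2 ⟨Finset.mem_univ _, rfl, hr'⟩, hT⟩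
  refine le_min ?_ ?_
  · calc _ ≤ ∑ c : CbkK 𝓧 N rate, cbkProbK rate Pd c := Finset.sum_le_sum fun c _ =>
          mul_le_of_le_one_right (cbkProbK_nonneg hPd c) (by split_ifs <;> norm_num)
      _ = 1 := sum_cbkProbK hPd
  · calc _ ≤ ∑ c, cbkProbK rate Pd c * ∑ p' ∈ A,
            if T x (mergeS S (fun k => x k.1) fun k => cw c p' k.1) y then 1 else 0 :=
          Finset.sum_le_sum fun c _ =>
            mul_le_mul_of_nonneg_left (hunion c) (cbkProbK_nonneg hPd c)
      _ = ∑ p' ∈ A, ∑ xb : ∀ k : {k // k ∉ S}, Fin N → 𝓧 k.1,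
            (∏ k, wordLaw N Pd r' k.1 (xb k)) *
              if T x (mergeS S (fun k => x k.1) xb) y then 1 else 0 := by
          simp only [Finset.mul_sum]
          rw [Finset.sum_comm]
          refine Finset.sum_congr rfl fun p' hp' => ?_
          obtain ⟨-, rfl⟩ := (Finset.mem_filter.1 hp').2
          exact sum_cbkProbK_mul_cw_compl hPd p' S fun xb =>
            if T x (mergeS S (fun k => x k.1) xb) y then 1 else 0
      _ ≤ _ := by
          rw [Finset.sum_const, nsmul_eq_mul]
          refine mul_le_mul_of_nonneg_right (card_agreeSet_eq_le p S r') ?_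
          exact Finset.sum_nonneg fun xb _ => mul_nonneg
            (Finset.prod_nonneg fun _ _ => wordLaw_nonneg hPd ..) (by positivity)

variable [Fintype 𝓨] {W : (∀ k, 𝓧 k) → 𝓨 → ℝ}

lemma prTxK_nonneg (hW : ∀ x y, 0 ≤ W x y) (hPd : ∀ k i, IsDist (Pd k i)) (p : MsgK N rate)
    (E : CbkK 𝓧 N rate → (Fin N → 𝓨) → Prop) : 0 ≤ prTxK W rate Pd p E :=
  Finset.sum_nonneg fun c _ => Finset.sum_nonneg fun _ _ => mul_nonneg
    (mul_nonneg (cbkProbK_nonneg hPd c) (WnK_nonneg hW _ _)) (by positivity)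

lemma prTxK_le_one (hW : IsMAC W) (hPd : ∀ k i, IsDist (Pd k i)) (p : MsgK N rate)
    (E : CbkK 𝓧 N rate → (Fin N → 𝓨) → Prop) : prTxK W rate Pd p E ≤ 1 :=
  calc prTxK W rate Pd p E
      ≤ ∑ c : CbkK 𝓧 N rate, ∑ y, cbkProbK rate Pd c * WnK W (cw c p) y :=
        Finset.sum_le_sum fun c _ => Finset.sum_le_sum fun y _ => mul_le_of_le_one_right
          (mul_nonneg (cbkProbK_nonneg hPd c) (WnK_nonneg hW.1 _ _)) (by split_ifs <;> norm_num)
    _ = 1 := by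
        simp only [← Finset.mul_sum, (hW.WnK N).2, mul_one, sum_cbkProbK hPd]

lemma prTxK_le_sum (hW : ∀ x y, 0 ≤ W x y) (hPd : ∀ k i, IsDist (Pd k i)) (p : MsgK N rate)
    {ι : Type*} {I : Finset ι} {E : CbkK 𝓧 N rate → (Fin N → 𝓨) → Prop}
    {F : ι → CbkK 𝓧 N rate → (Fin N → 𝓨) → Prop} (h : ∀ c y, E c y → ∃ i ∈ I, F i c y) :
    prTxK W rate Pd p E ≤ ∑ i ∈ I, prTxK W rate Pd p (F i) := by
  simp only [prTxK]
  conv_rhs => rw [Finset.sum_comm]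
  refine Finset.sum_le_sum fun c _ => ?_
  conv_rhs => rw [Finset.sum_comm]
  refine Finset.sum_le_sum fun y _ => ?_
  rw [← Finset.mul_sum]
  exact mul_le_mul_of_nonneg_left (ite_le_sum_ite (h c y))
    (mul_nonneg (cbkProbK_nonneg hPd c) (WnK_nonneg hW _ _))

lemma prTxK_cw (hPd : ∀ k i, IsDist (Pd k i)) (p : MsgK N rate)
    (E : (∀ k, Fin N → 𝓧 k) → (Fin N → 𝓨) → Prop) :
    prTxK W rate Pd p (fun c y => E (cw c p) y) =
      ∑ y, ∑ x : ∀ k, Fin N → 𝓧 k, (∏ k, wordLaw N Pd (rv p) k (x k)) *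
        (WnK W x y * if E x y then 1 else 0) := by
  rw [prTxK, Finset.sum_comm]
  refine Finset.sum_congr rfl fun y _ => ?_
  simp only [mul_assoc]
  exact sum_cbkProbK_mul_cw hPd p fun x => WnK W x y * if E x y then 1 else 0

lemma prTxK_confused_le (hW : ∀ x y, 0 ≤ W x y) (hPd : ∀ k i, IsDist (Pd k i)) (p : MsgK N rate)
    (S : Finset (Fin K)) (r' : Fin K → Fin M)
    (T : (∀ k, Fin N → 𝓧 k) → (∀ k, Fin N → 𝓧 k) → (Fin N → 𝓨) → Prop) :
    prTxK W rate Pd p (Confused p S r' T) ≤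
      confusionBound (WnK W) S (wordLaw N Pd (rv p)) (wordLaw N Pd r')
        (Real.exp (N * ∑ k ∈ Sᶜ, rate k (r' k))) T := by
  rw [prTxK, Finset.sum_comm]
  refine Finset.sum_le_sum fun y _ => ?_
  simp only [mul_assoc]
  rw [sum_cbkProbK_mul_eq_sum_setCw hPd p]
  refine Finset.sum_le_sum fun x _ => mul_le_mul_of_nonneg_left ?_
    (Finset.prod_nonneg fun _ _ => wordLaw_nonneg hPd ..)
  simp only [cw_setCw_self, mul_left_comm (cbkProbK _ _ _), ← Finset.mul_sum]
  exact mul_le_mul_of_nonneg_left (sum_cbkProbK_confused_le hPd p S r' T x y)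
    (WnK_nonneg hW _ _)

end ErrorEvents

section Exponents

lemma exp_rpow_mul_pow_le {R ρ G E : ℝ} (hG : 0 ≤ G) (hE : E < -ρ * R - Real.log G) (N : ℕ) :
    Real.exp (N * R) ^ ρ * G ^ N ≤ Real.exp (-(N * E)) := by
  rcases hG.eq_or_lt with rfl | hG
  · rcases N.eq_zero_or_pos with rfl | hN
    · simp
    · rw [zero_pow hN.ne', mul_zero]
      positivity
  · calc Real.exp (N * R) ^ ρ * G ^ N = Real.exp (N * (ρ * R + Real.log G)) := by
          rw [← Real.exp_mul, mul_add, Real.exp_add, Real.exp_nat_mul (Real.log G),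
            Real.exp_log hG]
          ring_nf
      _ ≤ Real.exp (-(N * E)) := by
          rw [Real.exp_le_exp, ← mul_neg]
          exact mul_le_mul_of_nonneg_left (by linarith) N.cast_nonneg

variable {K M : ℕ} {𝓧 : Fin K → Type*} [∀ k, Fintype (𝓧 k)] {𝓨 : Type*} [Fintype 𝓨]
  {W : (∀ k, 𝓧 k) → 𝓨 → ℝ} {S : Finset (Fin K)} {E : ℝ}

lemma exists_lt_of_lt_EmK {P Q : ∀ k, 𝓧 k → ℝ} {R : ℝ} (hE : E < EmK W S R P Q) :
    ∃ ρ ∈ Set.Ioc (0 : ℝ) 1, ∃ s ∈ Set.Ioc (0 : ℝ) 1,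
      E < -ρ * R - Real.log (GmK W S P Q ρ s) := by
  obtain ⟨_, ⟨ρ, hρ, rfl⟩, hE⟩ :=
    exists_lt_of_lt_csSup (Set.Nonempty.image _ ⟨1, by norm_num⟩) hE
  obtain ⟨_, ⟨s, hs, rfl⟩, hE⟩ :=
    exists_lt_of_lt_csSup (Set.Nonempty.image _ ⟨1, by norm_num⟩) (sub_lt_iff_lt_add'.2 hE)
  exact ⟨ρ, hρ, s, hs, lt_add_of_sub_left_lt hE⟩

lemma exists_lt_of_lt_EiK {P Q : ∀ k, 𝓧 k → ℝ} {R : ℝ} (hE : E < EiK W S R P Q) :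
    ∃ ρ ∈ Set.Ioo (0 : ℝ) 1, ∃ s ∈ Set.Ioc (0 : ℝ) (1 - ρ),
      E < -ρ * R - Real.log (GiK W S P Q ρ s) := by
  obtain ⟨_, ⟨ρ, hρ, rfl⟩, hE⟩ :=
    exists_lt_of_lt_csSup (Set.Nonempty.image _ ⟨1 / 2, by norm_num⟩) hE
  obtain ⟨_, ⟨s, hs, rfl⟩, hE⟩ := exists_lt_of_lt_csSup
    (Set.Nonempty.image _ ⟨1 - ρ, Set.right_mem_Ioc.2 (sub_pos.2 hρ.2)⟩) hE
  exact ⟨ρ, hρ, s, hs, hE⟩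

variable {N : ℕ} {rate : Fin K → Fin M → ℝ} {Pd : ∀ k, Fin M → 𝓧 k → ℝ}

lemma prTxK_confused_likelihood_le (hW : ∀ x y, 0 ≤ W x y) (hPd : ∀ k i, IsDist (Pd k i))
    (p : MsgK N rate) {r' : Fin K → Fin M}
    (hE : E < EmK W S (∑ k ∈ Sᶜ, rate k (r' k)) (fun k => Pd k (rv p k)) fun k => Pd k (r' k)) :
    prTxK W rate Pd p (Confused p S r' fun x x' y => WnK W x y ≤ WnK W x' y) ≤
      Real.exp (-(N * E)) := by
  obtain ⟨ρ, hρ, s, hs, hE⟩ := exists_lt_of_lt_EmK hE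
  have hlaw := wordLaw_nonneg hPd N
  refine (prTxK_confused_le hW hPd p S r' _).trans ((confusionBound_likelihood_le
    (WnK_nonneg hW) (hlaw _) (hlaw _) (Real.exp_pos _).le hρ hs.1).trans ?_)
  rw [GmK_WnK_iidLaw hW (fun k => (hPd k _).1) fun k => (hPd k _).1]
  exact exp_rpow_mul_pow_le (GmK_nonneg hW (fun k => (hPd k _).1) (fun k => (hPd k _).1) ..) hE N

/-- When messages at the rate vector `r` are sent, the test `T` rejects the sent words with
probability at most `ε`; when messages at `r'` are sent, it accepts words of other messages at `r`,
agreeing with the sent ones exactly on `S`, with probability at most `ε`. -/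
def Separates (W : (∀ k, 𝓧 k) → 𝓨 → ℝ) (rate : Fin K → Fin M → ℝ) (Pd : ∀ k, Fin M → 𝓧 k → ℝ)
    (S : Finset (Fin K)) (r r' : Fin K → Fin M) (ε : ℝ)
    (T : (∀ k, Fin N → 𝓧 k) → (Fin N → 𝓨) → Prop) : Prop :=
  (∀ p : MsgK N rate, rv p = r → prTxK W rate Pd p (fun c y => ¬ T (cw c p) y) ≤ ε) ∧
    ∀ p : MsgK N rate, rv p = r' → prTxK W rate Pd p (Confused p S r fun _ x' y => T x' y) ≤ ε

lemma exists_separates (hW : ∀ x y, 0 ≤ W x y) (hPd : ∀ k i, IsDist (Pd k i))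
    {r r' : Fin K → Fin M} (hr : ∀ k ∈ S, r k = r' k)
    (hE : E < EiK W S (∑ k ∈ Sᶜ, rate k (r k)) (fun k => Pd k (r k)) fun k => Pd k (r' k))
    (N : ℕ) :
    ∃ T : (∀ k, Fin N → 𝓧 k) → (Fin N → 𝓨) → Prop,
      Separates W rate Pd S r r' (Real.exp (-(N * E))) T := by
  obtain ⟨ρ, hρ, s, hs, hE⟩ := exists_lt_of_lt_EiK hE
  have hlaw := wordLaw_nonneg hPd N
  have hbound : Real.exp (N * ∑ k ∈ Sᶜ, rate k (r k)) ^ ρ *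
      GiK (WnK W (N := N)) S (wordLaw N Pd r) (wordLaw N Pd r') ρ s ≤ Real.exp (-(N * E)) := by
    rw [GiK_WnK_iidLaw hW (fun k => (hPd k _).1) fun k => (hPd k _).1]
    exact exp_rpow_mul_pow_le (GiK_nonneg hW (fun k => (hPd k _).1) (fun k => (hPd k _).1) ..)
      hE N
  refine ⟨collisionTest (WnK W) S (wordLaw N Pd r) (wordLaw N Pd r')
    (Real.exp (N * ∑ k ∈ Sᶜ, rate k (r k))) ρ s, ?_, ?_⟩
  · rintro p rfl
    rw [prTxK_cw hPd p fun x y => ¬ collisionTest (WnK W) S _ _ _ ρ s x y]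
    refine le_of_eq_of_le ?_ ((sum_not_collisionTest_le (WnK_nonneg hW) (hlaw _) (hlaw _)
      (Real.exp_pos _).le hρ.1 hs.1).trans hbound)
    congr!
  · rintro p rfl
    refine (prTxK_confused_le hW hPd p S r _).trans (le_trans ?_ hbound)
    exact confusionBound_collisionTest_le (WnK_nonneg hW) (hlaw _) (hlaw _)
      (fun k hk => by rw [wordLaw, hr k hk]) (Real.exp_pos _) hρ.1 hs

end Exponents

section Achievability

variable {K M : ℕ} {𝓧 : Fin K → Type*} {𝓨 : Type*} {N : ℕ} {rate : Fin K → Fin M → ℝ}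
  {W : (∀ k, 𝓧 k) → 𝓨 → ℝ} {R : Finset (Fin K → Fin M)}
  {T : Finset (Fin K) → (Fin K → Fin M) → (Fin K → Fin M) →
    (∀ k, Fin N → 𝓧 k) → (Fin N → 𝓨) → Prop}

/-- The ways in which a pair may compete with one of rate vector `r`: the set of users on which the
two coincide, and the rate vector of the competitor. -/
def rivals (r : Fin K → Fin M) : Finset (Finset (Fin K) × (Fin K → Fin M)) :=
  Finset.univ.filter fun i => i.1 ≠ Finset.univ ∧ ∀ k ∈ i.1, r k = i.2 k

lemma mk_agreeSet_mem_rivals {p p' : MsgK N rate} (hp : p ≠ p') :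
    (agreeSet p p', rv p') ∈ rivals (rv p) := by
  refine Finset.mem_filter.2 ⟨Finset.mem_univ _, fun hS => hp ?_, fun k => rv_eq_of_mem_agreeSet⟩
  funext k
  exact (Finset.mem_filter.1 (Finset.eq_univ_iff_forall.1 hS k)).2

/-- Upon observing `y`, the pair `p` lies in the operation region, is strictly more likely than all
other pairs of the region, and passes the tests `T` against all rate vectors outside the region. -/
def Accepts (W : (∀ k, 𝓧 k) → 𝓨 → ℝ) (R : Finset (Fin K → Fin M))
    (T : Finset (Fin K) → (Fin K → Fin M) → (Fin K → Fin M) →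
      (∀ k, Fin N → 𝓧 k) → (Fin N → 𝓨) → Prop)
    (c : CbkK 𝓧 N rate) (y : Fin N → 𝓨) (p : MsgK N rate) : Prop :=
  rv p ∈ R ∧ (∀ p', rv p' ∈ R → p' ≠ p → WnK W (cw c p') y < WnK W (cw c p) y) ∧
    ∀ i ∈ rivals (rv p), i.2 ∉ R → T i.1 (rv p) i.2 (cw c p) y

/-- The decoder which outputs the accepted pair, or a collision if there is none. -/
def mlDecoder (W : (∀ k, 𝓧 k) → 𝓨 → ℝ) (R : Finset (Fin K → Fin M))
    (T : Finset (Fin K) → (Fin K → Fin M) → (Fin K → Fin M) →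
      (∀ k, Fin N → 𝓧 k) → (Fin N → 𝓨) → Prop)
    (c : CbkK 𝓧 N rate) (y : Fin N → 𝓨) : Option (MsgK N rate) :=
  if h : ∃ p, Accepts W R T c y p then some h.choose else none

lemma Accepts.unique {c : CbkK 𝓧 N rate} {y : Fin N → 𝓨} {p p' : MsgK N rate}
    (hp : Accepts W R T c y p) (hp' : Accepts W R T c y p') : p = p' := by
  by_contra hne
  exact lt_asymm (hp.2.1 p' hp'.1 (Ne.symm hne)) (hp'.2.1 p hp.1 hne)

lemma mlDecoder_eq_some_iff {c : CbkK 𝓧 N rate} {y : Fin N → 𝓨} {p : MsgK N rate} :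
    mlDecoder W R T c y = some p ↔ Accepts W R T c y p := by
  rw [mlDecoder]
  split_ifs with h
  · exact ⟨fun hp => Option.some.inj hp ▸ h.choose_spec,
      fun hp => congrArg some (h.choose_spec.unique hp)⟩
  · exact ⟨fun hp => hp.elim, fun hp => absurd ⟨p, hp⟩ h⟩

variable [∀ k, Fintype (𝓧 k)] [Fintype 𝓨] {Pd : ∀ k, Fin M → 𝓧 k → ℝ} {ε : ℝ}

lemma prTxK_le_card_mul (hW : ∀ x y, 0 ≤ W x y) (hPd : ∀ k i, IsDist (Pd k i)) (p : MsgK N rate)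
    {ι : Type*} [Fintype ι] {I : Finset ι} {E : CbkK 𝓧 N rate → (Fin N → 𝓨) → Prop}
    {F : ι → CbkK 𝓧 N rate → (Fin N → 𝓨) → Prop} (h : ∀ c y, E c y → ∃ i ∈ I, F i c y)
    (hε : 0 ≤ ε) (hF : ∀ i ∈ I, prTxK W rate Pd p (F i) ≤ ε) :
    prTxK W rate Pd p E ≤ Fintype.card ι * ε :=
  calc prTxK W rate Pd p E ≤ ∑ i ∈ I, prTxK W rate Pd p (F i) := prTxK_le_sum hW hPd p h
    _ ≤ I.card * ε := by simpa only [nsmul_eq_mul] using Finset.sum_le_card_nsmul I _ ε hF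
    _ ≤ Fintype.card ι * ε :=
      mul_le_mul_of_nonneg_right (Nat.cast_le.2 (Finset.card_le_univ I)) hε

lemma prTxK_mlDecoder_ne_some_le (hW : ∀ x y, 0 ≤ W x y) (hPd : ∀ k i, IsDist (Pd k i))
    {p : MsgK N rate} (hp : rv p ∈ R) (hε : 0 ≤ ε)
    (hm : ∀ i ∈ rivals (rv p), i.2 ∈ R → prTxK W rate Pd p
      (Confused p i.1 i.2 fun x x' y => WnK W x y ≤ WnK W x' y) ≤ ε)
    (hT : ∀ i ∈ rivals (rv p), i.2 ∉ R →
      Separates W rate Pd i.1 (rv p) i.2 ε (T i.1 (rv p) i.2)) :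
    prTxK W rate Pd p (fun c y => mlDecoder W R T c y ≠ some p) ≤
      Fintype.card (Finset (Fin K) × (Fin K → Fin M)) * ε := by
  let F (i : Finset (Fin K) × (Fin K → Fin M)) : CbkK 𝓧 N rate → (Fin N → 𝓨) → Prop :=
    if i.2 ∈ R then Confused p i.1 i.2 fun x x' y => WnK W x y ≤ WnK W x' y
    else fun c y => ¬ T i.1 (rv p) i.2 (cw c p) y
  refine prTxK_le_card_mul hW hPd p (I := rivals (rv p)) (F := F) (fun c y hne => ?_) hε
    fun i hi => ?_
  · contrapose! hne
    refine mlDecoder_eq_some_iff.2 ⟨hp, fun p' hp' hpp' => ?_, fun i hi hiR => ?_⟩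
    · have hF := hne _ (mk_agreeSet_mem_rivals hpp'.symm)
      simp only [F, if_pos hp'] at hF
      exact not_le.1 fun hle => hF ⟨p', ⟨rfl, rfl⟩, hle⟩
    · have hF := hne i hi
      simp only [F, if_neg hiR] at hF
      exact not_not.1 hF
  · by_cases hiR : i.2 ∈ R
    · simpa only [F, if_pos hiR] using hm i hi hiR
    · simpa only [F, if_neg hiR] using (hT i hi hiR).1 p rfl

lemma prTxK_mlDecoder_ne_none_le (hW : ∀ x y, 0 ≤ W x y) (hPd : ∀ k i, IsDist (Pd k i))
    {p : MsgK N rate} (hp : rv p ∉ R) (hε : 0 ≤ ε)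
    (hT : ∀ i ∈ rivals (rv p), i.2 ∈ R →
      Separates W rate Pd i.1 i.2 (rv p) ε (T i.1 i.2 (rv p))) :
    prTxK W rate Pd p (fun c y => mlDecoder W R T c y ≠ none) ≤
      Fintype.card (Finset (Fin K) × (Fin K → Fin M)) * ε := by
  refine prTxK_le_card_mul hW hPd p (I := (rivals (rv p)).filter fun i => i.2 ∈ R)
    (F := fun i => Confused p i.1 i.2 fun _ x' y => T i.1 i.2 (rv p) x' y) (fun c y hne => ?_) hε
    fun i hi => (hT i (Finset.mem_filter.1 hi).1 (Finset.mem_filter.1 hi).2).2 p rfl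
  obtain ⟨p', hp'⟩ := Option.ne_none_iff_exists'.1 hne
  obtain ⟨hp'R, -, hpass⟩ := mlDecoder_eq_some_iff.1 hp'
  have hpp' : p ≠ p' := fun h => hp (h ▸ hp'R)
  have hriv : (agreeSet p p', rv p) ∈ rivals (rv p') := by
    have := mk_agreeSet_mem_rivals hpp'
    simp only [rivals, Finset.mem_filter, Finset.mem_univ, true_and] at this ⊢
    exact ⟨this.1, fun k hk => (this.2 k hk).symm⟩
  exact ⟨_, Finset.mem_filter.2 ⟨mk_agreeSet_mem_rivals hpp', hp'R⟩, p', ⟨rfl, rfl⟩,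
    hpass _ hriv hp⟩

/-- The exponents `E_m^S(r,r̃)` of confusing rate vectors inside the operation region `R`. -/
def mExponents (W : (∀ k, 𝓧 k) → 𝓨 → ℝ) (rate : Fin K → Fin M → ℝ) (Pd : ∀ k, Fin M → 𝓧 k → ℝ)
    (R : Finset (Fin K → Fin M)) : Set ℝ :=
  {e | ∃ S : Finset (Fin K), S ≠ Finset.univ ∧ ∃ r ∈ R, ∃ rt ∈ R, (∀ k ∈ S, r k = rt k) ∧
    e = EmK W S (∑ k ∈ Sᶜ, rate k (rt k)) (fun k => Pd k (r k)) (fun k => Pd k (rt k))}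

/-- The exponents `E_i^S(r,r̃)` of confusing rate vectors inside and outside the operation region
`R`. -/
def iExponents (W : (∀ k, 𝓧 k) → 𝓨 → ℝ) (rate : Fin K → Fin M → ℝ) (Pd : ∀ k, Fin M → 𝓧 k → ℝ)
    (R : Finset (Fin K → Fin M)) : Set ℝ :=
  {e | ∃ S : Finset (Fin K), S ≠ Finset.univ ∧ ∃ r ∈ R, ∃ rt ∈ Finset.univ \ R,
    (∀ k ∈ S, r k = rt k) ∧
      e = EiK W S (∑ k ∈ Sᶜ, rate k (r k)) (fun k => Pd k (r k)) (fun k => Pd k (rt k))}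

lemma bddBelow_mExponents (W : (∀ k, 𝓧 k) → 𝓨 → ℝ) (rate : Fin K → Fin M → ℝ)
    (Pd : ∀ k, Fin M → 𝓧 k → ℝ) (R : Finset (Fin K → Fin M)) :
    BddBelow (mExponents W rate Pd R) := by
  refine ((Set.finite_range fun q : Finset (Fin K) × (Fin K → Fin M) × (Fin K → Fin M) =>
    EmK W q.1 (∑ k ∈ q.1ᶜ, rate k (q.2.2 k)) (fun k => Pd k (q.2.1 k))
      fun k => Pd k (q.2.2 k)).subset ?_).bddBelow
  rintro _ ⟨S, -, r, -, rt, -, -, rfl⟩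
  exact ⟨(S, r, rt), rfl⟩

lemma bddBelow_iExponents (W : (∀ k, 𝓧 k) → 𝓨 → ℝ) (rate : Fin K → Fin M → ℝ)
    (Pd : ∀ k, Fin M → 𝓧 k → ℝ) (R : Finset (Fin K → Fin M)) :
    BddBelow (iExponents W rate Pd R) := by
  refine ((Set.finite_range fun q : Finset (Fin K) × (Fin K → Fin M) × (Fin K → Fin M) =>
    EiK W q.1 (∑ k ∈ q.1ᶜ, rate k (q.2.1 k)) (fun k => Pd k (q.2.1 k))
      fun k => Pd k (q.2.2 k)).subset ?_).bddBelow
  rintro _ ⟨S, -, r, -, rt, -, -, rfl⟩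
  exact ⟨(S, r, rt), rfl⟩

lemma exists_separates_of_lt_iExponents (hW : ∀ x y, 0 ≤ W x y)
    (hPd : ∀ k i, IsDist (Pd k i)) {E : ℝ} (hE : ∀ e ∈ iExponents W rate Pd R, E < e) (N : ℕ) :
    ∃ T : Finset (Fin K) → (Fin K → Fin M) → (Fin K → Fin M) →
        (∀ k, Fin N → 𝓧 k) → (Fin N → 𝓨) → Prop,
      ∀ S r r', S ≠ Finset.univ → r ∈ R → r' ∉ R → (∀ k ∈ S, r k = r' k) →
        Separates W rate Pd S r r' (Real.exp (-(N * E))) (T S r r') := by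
  have hex (S r r') : ∃ T : (∀ k, Fin N → 𝓧 k) → (Fin N → 𝓨) → Prop,
      S ≠ Finset.univ → r ∈ R → r' ∉ R → (∀ k ∈ S, r k = r' k) →
        Separates W rate Pd S r r' (Real.exp (-(N * E))) T := by
    by_cases h : S ≠ Finset.univ ∧ r ∈ R ∧ r' ∉ R ∧ ∀ k ∈ S, r k = r' k
    · obtain ⟨hS, hr, hr', hrr'⟩ := h
      have hr'R : r' ∈ Finset.univ \ R := Finset.mem_sdiff.2 ⟨Finset.mem_univ _, hr'⟩
      obtain ⟨T, hT⟩ := exists_separates hW hPd hrr' (hE _ ⟨S, hS, r, hr, r', hr'R, hrr', rfl⟩) N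
      exact ⟨T, fun _ _ _ _ => hT⟩
    · exact ⟨fun _ _ => True, fun hS hr hr' hrr' => absurd ⟨hS, hr, hr', hrr'⟩ h⟩
  choose T hT using hex
  exact ⟨T, hT⟩

lemma exists_PesK_le (hW : ∀ x y, 0 ≤ W x y) (hPd : ∀ k i, IsDist (Pd k i)) {E : ℝ}
    (hm : ∀ e ∈ mExponents W rate Pd R, E < e) (hi : ∀ e ∈ iExponents W rate Pd R, E < e)
    (N : ℕ) :
    ∃ D : CbkK 𝓧 N rate → (Fin N → 𝓨) → Option (MsgK N rate),
      (∀ c y p, D c y = some p → rv p ∈ R) ∧ PesK W N rate Pd R D ≤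
        Fintype.card (Finset (Fin K) × (Fin K → Fin M)) * Real.exp (-(N * E)) := by
  obtain ⟨T, hT⟩ := exists_separates_of_lt_iExponents hW hPd hi N
  have hε : 0 ≤ Real.exp (-(N * E)) := (Real.exp_pos _).le
  refine ⟨mlDecoder W R T, fun c y p hp => (mlDecoder_eq_some_iff.1 hp).1,
    Real.sSup_le ?_ (by positivity)⟩
  rintro _ ⟨p, rfl⟩
  dsimp only
  split_ifs with hp
  · refine prTxK_mlDecoder_ne_some_le hW hPd hp hε (fun i hi hiR => ?_) fun i hi hiR => ?_
    all_goals obtain ⟨-, hS, hr⟩ := Finset.mem_filter.1 hi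
    · exact prTxK_confused_likelihood_le hW hPd p
        (hm _ ⟨i.1, hS, rv p, hp, i.2, hiR, hr, rfl⟩)
    · exact hT _ _ _ hS hp hiR hr
  · refine prTxK_mlDecoder_ne_none_le hW hPd hp hε fun i hi hiR => ?_
    obtain ⟨-, hS, hr⟩ := Finset.mem_filter.1 hi
    exact hT _ _ _ hS hiR hp fun k hk => (hr k hk).symm

end Achievability

section Converse

variable {K M : ℕ} {𝓧 : Fin K → Type*} [∀ k, Fintype (𝓧 k)] {𝓨 : Type*} [Fintype 𝓨]
  {W : (∀ k, 𝓧 k) → 𝓨 → ℝ} {N : ℕ} {rate : Fin K → Fin M → ℝ} {Pd : ∀ k, Fin M → 𝓧 k → ℝ}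

lemma PesK_nonneg (hW : ∀ x y, 0 ≤ W x y) (hPd : ∀ k i, IsDist (Pd k i))
    (R : Finset (Fin K → Fin M)) (D : CbkK 𝓧 N rate → (Fin N → 𝓨) → Option (MsgK N rate)) :
    0 ≤ PesK W N rate Pd R D := by
  refine Real.sSup_nonneg ?_
  rintro _ ⟨p, rfl⟩
  dsimp only
  split_ifs <;> exact prTxK_nonneg hW hPd p _

lemma PesK_le_one (hW : IsMAC W) (hPd : ∀ k i, IsDist (Pd k i))
    (R : Finset (Fin K → Fin M)) (D : CbkK 𝓧 N rate → (Fin N → 𝓨) → Option (MsgK N rate)) :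
    PesK W N rate Pd R D ≤ 1 := by
  refine Real.sSup_le ?_ zero_le_one
  rintro _ ⟨p, rfl⟩
  dsimp only
  split_ifs <;> exact prTxK_le_one hW hPd p _

lemma sum_min_WnK_le_two_mul_PesK (hW : ∀ x y, 0 ≤ W x y) (hPd : ∀ k i, IsDist (Pd k i))
    {R : Finset (Fin K → Fin M)} {p p' : MsgK N rate} (hp : rv p ∈ R) (hp' : rv p' ∉ R)
    (D : CbkK 𝓧 N rate → (Fin N → 𝓨) → Option (MsgK N rate)) :
    ∑ c, cbkProbK rate Pd c * ∑ y, min (WnK W (cw c p) y) (WnK W (cw c p') y) ≤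
      2 * PesK W N rate Pd R D := by
  have hle (q : MsgK N rate) : (if rv q ∈ R then prTxK W rate Pd q (fun c y => D c y ≠ some q)
      else prTxK W rate Pd q (fun c y => D c y ≠ none)) ≤ PesK W N rate Pd R D :=
    le_csSup (Set.finite_range _).bddAbove (Set.mem_range_self q)
  have hsome := hle p
  have hnone := hle p'
  rw [if_pos hp] at hsome
  rw [if_neg hp'] at hnone
  refine le_trans ?_ ((add_le_add hsome hnone).trans_eq (two_mul _).symm)
  simp only [prTxK, ← Finset.sum_add_distrib, Finset.mul_sum]
  refine Finset.sum_le_sum fun c _ => Finset.sum_le_sum fun y _ => ?_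
  rw [mul_assoc, mul_assoc, ← mul_add]
  refine mul_le_mul_of_nonneg_left ?_ (cbkProbK_nonneg hPd c)
  by_cases hD : D c y = none
  · rw [if_pos (by simp [hD]), if_neg (not_not.2 hD), mul_one, mul_zero, add_zero]
    exact min_le_left _ _
  · rw [if_pos hD, mul_one]
    exact (min_le_right _ _).trans (le_add_of_nonneg_left
      (mul_nonneg (WnK_nonneg hW _ y) (by positivity)))

lemma le_sum_cbkProbK_mul_min_WnK (hW : ∀ x y, 0 ≤ W x y) (hPd : ∀ k i, IsDist (Pd k i))
    {p p' : MsgK N rate} {S : Finset (Fin K)} (hS : agreeSet p p' = S) (x : ∀ k, Fin N → 𝓧 k)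
    (xb : ∀ k : {k // k ∉ S}, Fin N → 𝓧 k.1) (y : Fin N → 𝓨) :
    (∏ k, wordLaw N Pd (rv p) k (x k)) * ((∏ k, wordLaw N Pd (rv p') k.1 (xb k)) *
        min (WnK W x y) (WnK W (mergeS S (fun k => x k.1) xb) y)) ≤
      ∑ c, cbkProbK rate Pd c * ∑ y, min (WnK W (cw c p) y) (WnK W (cw c p') y) := by
  subst hS
  have hmin (x x' : ∀ k, Fin N → 𝓧 k) (y : Fin N → 𝓨) : 0 ≤ min (WnK W x y) (WnK W x' y) :=
    le_min (WnK_nonneg hW x y) (WnK_nonneg hW x' y)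
  have hprod {ι : Type} [Fintype ι] (f : ι → Fin K) (r : Fin K → Fin M)
      (x : ∀ i, Fin N → 𝓧 (f i)) : 0 ≤ ∏ i, wordLaw N Pd r (f i) (x i) :=
    Finset.prod_nonneg fun _ _ => wordLaw_nonneg hPd ..
  have hinner (x : ∀ k, Fin N → 𝓧 k) (xb : ∀ k : {k // k ∉ agreeSet p p'}, Fin N → 𝓧 k.1) :
      0 ≤ (∏ k, wordLaw N Pd (rv p') k.1 (xb k)) *
        ∑ y, min (WnK W x y) (WnK W (mergeS (agreeSet p p') (fun k => x k.1) xb) y) :=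
    mul_nonneg (hprod Subtype.val _ xb) (Finset.sum_nonneg fun y _ => hmin _ _ y)
  rw [sum_cbkProbK_mul_cw_cw hPd p p' fun x x' => ∑ y, min (WnK W x y) (WnK W x' y)]
  refine le_trans (mul_le_mul_of_nonneg_left ?_ (hprod id _ x)) (Finset.single_le_sum
    (fun x _ => mul_nonneg (hprod id _ x) (Finset.sum_nonneg fun xb _ => hinner x xb))
    (Finset.mem_univ x))
  refine le_trans (mul_le_mul_of_nonneg_left ?_ (hprod Subtype.val _ xb))
    (Finset.single_le_sum (fun xb _ => hinner x xb) (Finset.mem_univ xb))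
  exact Finset.single_le_sum (fun y _ => hmin _ _ y) (Finset.mem_univ y)

lemma ne_zero_of_rpow_ne_zero {a b : ℝ} (h : a ^ b ≠ 0) (hb : b ≠ 0) : a ≠ 0 := by
  rintro rfl
  exact h (Real.zero_rpow hb)

lemma exists_pos_of_EiK_pos (hW : ∀ x y, 0 ≤ W x y) {S : Finset (Fin K)} {P Q : ∀ k, 𝓧 k → ℝ}
    (hP : ∀ k x, 0 ≤ P k x) (hQ : ∀ k x, 0 ≤ Q k x) {B : ℝ} (hB : 0 ≤ B)
    (hE : 0 < EiK W S B P Q) :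
    ∃ (x : ∀ k, 𝓧 k) (xb : ∀ k : {k // k ∉ S}, 𝓧 k.1) (y : 𝓨), 0 < ∏ k, P k (x k) ∧
      0 < ∏ k, Q k.1 (xb k) ∧ 0 < W x y ∧ 0 < W (mergeS S (fun k => x k.1) xb) y := by
  obtain ⟨ρ, ⟨hρ, -⟩, s, ⟨hs, hsρ⟩, hE⟩ := exists_lt_of_lt_EiK hE
  have hG : GiK W S P Q ρ s ≠ 0 := by
    intro h
    rw [h, Real.log_zero] at hE
    nlinarith
  rw [GiK_eq_gallagerSum] at hG
  obtain ⟨y, -, hy⟩ := Finset.exists_ne_zero_of_sum_ne_zero hG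
  obtain ⟨xs, -, hxs⟩ := Finset.exists_ne_zero_of_sum_ne_zero hy
  obtain ⟨hPxs, hmom⟩ := mul_ne_zero_iff.1 hxs
  obtain ⟨hmomP, hmomQ⟩ := mul_ne_zero_iff.1 hmom
  obtain ⟨u, -, hu⟩ := Finset.exists_ne_zero_of_sum_ne_zero
    (ne_zero_of_rpow_ne_zero hmomP (by positivity))
  obtain ⟨xb, -, hxb⟩ := Finset.exists_ne_zero_of_sum_ne_zero
    (ne_zero_of_rpow_ne_zero hmomQ (by linarith))
  obtain ⟨hPu, hWu⟩ := mul_ne_zero_iff.1 hu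
  obtain ⟨hQxb, hWxb⟩ := mul_ne_zero_iff.1 hxb
  refine ⟨mergeS S xs u, xb, y, ?_, ?_, ?_, ?_⟩
  · refine (Finset.prod_nonneg fun k _ => hP k _).lt_of_ne' ?_
    exact prod_mergeS S P xs u ▸ mul_ne_zero hPxs hPu
  · exact (Finset.prod_nonneg fun k _ => hQ k.1 _).lt_of_ne' hQxb
  · exact (hW _ _).lt_of_ne' (ne_zero_of_rpow_ne_zero hWu (by positivity))
  · simp only [mergeS_mem]
    exact (hW _ _).lt_of_ne' (ne_zero_of_rpow_ne_zero hWxb one_ne_zero)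

lemma exists_pow_div_two_le_PesK (hW : ∀ x y, 0 ≤ W x y) (hrate : ∀ k i, 0 ≤ rate k i)
    (hPd : ∀ k i, IsDist (Pd k i)) {R : Finset (Fin K → Fin M)} {r rt : Fin K → Fin M}
    (hr : r ∈ R) (hrt : rt ∉ R) {S : Finset (Fin K)} (hS : ∀ k, k ∈ S ↔ r k = rt k)
    (hE : 0 < EiK W S (∑ k ∈ Sᶜ, rate k (r k)) (fun k => Pd k (r k)) (fun k => Pd k (rt k))) :
    ∃ δ : ℝ, 0 < δ ∧ ∀ (N : ℕ) (D : CbkK 𝓧 N rate → (Fin N → 𝓨) → Option (MsgK N rate)),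
      δ ^ N / 2 ≤ PesK W N rate Pd R D := by
  obtain ⟨x, xb, y, hP, hQ, hWx, hWx'⟩ := exists_pos_of_EiK_pos hW (fun k => (hPd k (r k)).1)
    (fun k => (hPd k (rt k)).1) (Finset.sum_nonneg fun k _ => hrate k (r k)) hE
  refine ⟨(∏ k, Pd k (r k) (x k)) * ((∏ k : {k // k ∉ S}, Pd k.1 (rt k.1) (xb k)) *
    min (W x y) (W (mergeS S (fun k => x k.1) xb) y)),
    mul_pos hP (mul_pos hQ (lt_min hWx hWx')), fun N D => ?_⟩
  have hnum (k i) : 0 < numMsgK N rate k i :=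
    Nat.floor_pos.2 (Real.one_le_exp (mul_nonneg (Nat.cast_nonneg N) (hrate k i)))
  let firstMsg (k : Fin K) (i : Fin M) : (i : Fin M) × Fin (numMsgK N rate k i) :=
    ⟨i, 0, hnum k i⟩
  have hagree : agreeSet (fun k => firstMsg k (r k)) (fun k => firstMsg k (rt k)) = S := by
    ext k
    rw [agreeSet, Finset.mem_filter, hS]
    exact ⟨fun h => congrArg Sigma.fst h.2, fun h =>
      ⟨Finset.mem_univ k, congrArg (firstMsg k) h⟩⟩
  rw [div_le_iff₀' two_pos]
  refine le_trans (le_of_eq ?_) ((le_sum_cbkProbK_mul_min_WnK hW hPd hagree (fun k _ => x k)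
    (fun k _ => xb k) fun _ => y).trans (sum_min_WnK_le_two_mul_PesK hW hPd hr hrt D))
  have hmin {a b : ℝ} (ha : 0 ≤ a) (hb : 0 ≤ b) : min a b ^ N = min (a ^ N) (b ^ N) :=
    (pow_left_monotoneOn (n := N)).map_min ha hb
  simp only [wordLaw, iidLaw, WnK, mergeS_apply_letter, Finset.prod_const, Finset.card_univ,
    Fintype.card_fin, Finset.prod_pow, mul_pow, hmin hWx.le hWx'.le]
  rfl

end Converse

section Limits

lemma le_liminf_neg_log_div {P : ℕ → ℝ} {δ C E : ℝ} (hδ : 0 < δ) (hC : 0 < C)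
    (hlow : ∀ N, δ ^ N / 2 ≤ P N)
    (hup : ∀ N : ℕ, P N ≤ C * Real.exp (-(N * (E - 1 / ((N : ℝ) + 1))))) :
    E ≤ Filter.liminf (fun N : ℕ => -(1 / (N : ℝ)) * Real.log (P N)) Filter.atTop := by
  have hP (N : ℕ) : 0 < P N := lt_of_lt_of_le (by positivity) (hlow N)
  have hle (N : ℕ) (hN : 1 ≤ N) :
      -(1 / (N : ℝ)) * Real.log (P N) ≤ Real.log 2 - Real.log δ := by
    have hN1 : (1 : ℝ) ≤ N := Nat.one_le_cast.2 hN
    have hlog := Real.log_le_log (by positivity) (hlow N)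
    rw [Real.log_div (by positivity) two_ne_zero, Real.log_pow] at hlog
    have hlog2 : 0 < Real.log 2 := Real.log_pos one_lt_two
    rw [neg_mul, one_div, ← div_eq_inv_mul, ← neg_div, div_le_iff₀ (by positivity)]
    nlinarith
  have hge (N : ℕ) (hN : 1 ≤ N) :
      E - (Real.log C + 1) / N ≤ -(1 / (N : ℝ)) * Real.log (P N) := by
    have hN0 : (0 : ℝ) < N := Nat.cast_pos.2 hN
    have hlog := Real.log_le_log (hP N) (hup N)
    rw [Real.log_mul hC.ne' (Real.exp_ne_zero _), Real.log_exp] at hlog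
    have hfrac : (N : ℝ) * (1 / ((N : ℝ) + 1)) ≤ 1 := by
      rw [mul_one_div]
      exact (div_lt_one (by positivity)).2 (lt_add_one _) |>.le
    rw [neg_mul, one_div, ← div_eq_inv_mul, ← neg_div, le_div_iff₀ hN0, sub_mul,
      div_mul_cancel₀ _ hN0.ne']
    linarith
  have hcob : Filter.IsCoboundedUnder (· ≥ ·) Filter.atTop
      fun N : ℕ => -(1 / (N : ℝ)) * Real.log (P N) :=
    Filter.IsBoundedUnder.isCoboundedUnder_ge
      ⟨_, Filter.eventually_map.2 (Filter.eventually_atTop.2 ⟨1, hle⟩)⟩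
  have hlim : Filter.Tendsto (fun N : ℕ => E - (Real.log C + 1) / (N : ℝ)) Filter.atTop
      (nhds E) := by
    simpa only [sub_zero] using
      tendsto_const_nhds.sub (tendsto_const_div_atTop_nhds_zero_nat (Real.log C + 1))
  refine hlim.liminf_eq.ge.trans (Filter.liminf_le_liminf ?_ hlim.isBoundedUnder_ge hcob)
  exact Filter.eventually_atTop.2 ⟨1, hge⟩

lemma liminf_neg_log_div_nonneg {P : ℕ → ℝ} (h0 : ∀ N, 0 ≤ P N) (h1 : ∀ N, P N ≤ 1) :
    0 ≤ Filter.liminf (fun N : ℕ => -(1 / (N : ℝ)) * Real.log (P N)) Filter.atTop := by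
  rw [Filter.liminf_eq]
  refine Real.sSup_nonneg' ⟨0, Filter.Eventually.of_forall fun N => ?_, le_rfl⟩
  rw [neg_mul, ← mul_neg]
  exact mul_nonneg (by positivity) (neg_nonneg.2 (Real.log_nonpos (h0 N) (h1 N)))

end Limits

/-- `K`-user system error exponent (Corollary 2). -/
theorem stmt3 {K : ℕ} (hK : 1 ≤ K) {𝓧 : Fin K → Type*}
    [∀ k, Fintype (𝓧 k)] [∀ k, Nonempty (𝓧 k)]
    {𝓨 : Type*} [Fintype 𝓨] [Nonempty 𝓨]
    (W : (∀ k, 𝓧 k) → 𝓨 → ℝ) (hW : IsMAC W)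
    (M : ℕ)
    (rate : Fin K → Fin M → ℝ) (hrate : ∀ k i, 0 ≤ rate k i)
    (Pd : ∀ k, Fin M → 𝓧 k → ℝ) (hPd : ∀ k i, IsDist (Pd k i))
    (R : Finset (Fin K → Fin M)) (hR : R.Nonempty)
    (hRc : (Finset.univ \ R).Nonempty) :
    ∃ D : (N : ℕ) → CbkK 𝓧 N rate → (Fin N → 𝓨) → Option (MsgK N rate),
      (∀ N c y p, D N c y = some p → rv p ∈ R) ∧
      min
        (sInf {e : ℝ | ∃ S : Finset (Fin K), S ≠ Finset.univ ∧
          ∃ r ∈ R, ∃ rt ∈ R, (∀ k ∈ S, r k = rt k) ∧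
            e = EmK W S (∑ k ∈ Sᶜ, rate k (rt k))
                  (fun k => Pd k (r k)) (fun k => Pd k (rt k))})
        (sInf {e : ℝ | ∃ S : Finset (Fin K), S ≠ Finset.univ ∧
          ∃ r ∈ R, ∃ rt ∈ Finset.univ \ R, (∀ k ∈ S, r k = rt k) ∧
            e = EiK W S (∑ k ∈ Sᶜ, rate k (r k))
                  (fun k => Pd k (r k)) (fun k => Pd k (rt k))})
        ≤ Filter.liminf
            (fun N : ℕ => -(1 / (N : ℝ)) * Real.log (PesK W N rate Pd R (D N)))
            Filter.atTop := by
  set E := min (sInf (mExponents W rate Pd R)) (sInf (iExponents W rate Pd R))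
  have hm (e) (he : e ∈ mExponents W rate Pd R) : E ≤ e :=
    (min_le_left _ _).trans (csInf_le (bddBelow_mExponents W rate Pd R) he)
  have hi (e) (he : e ∈ iExponents W rate Pd R) : E ≤ e :=
    (min_le_right _ _).trans (csInf_le (bddBelow_iExponents W rate Pd R) he)
  have hlt (N : ℕ) : E - 1 / ((N : ℝ) + 1) < E := sub_lt_self E (by positivity)
  choose D hDR hDP using fun N : ℕ => exists_PesK_le hW.1 hPd
    (fun e he => (hlt N).trans_le (hm e he)) (fun e he => (hlt N).trans_le (hi e he)) N
  refine ⟨D, hDR, ?_⟩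
  change E ≤ _
  obtain hE | hE := le_or_gt E 0
  · exact hE.trans (liminf_neg_log_div_nonneg (fun N => PesK_nonneg hW.1 hPd R (D N))
      fun N => PesK_le_one hW hPd R (D N))
  obtain ⟨r, hr⟩ := hR
  obtain ⟨rt, hrt⟩ := hRc
  have hrtR : rt ∉ R := (Finset.mem_sdiff.1 hrt).2
  let S : Finset (Fin K) := Finset.univ.filter fun k => r k = rt k
  have hS (k) : k ∈ S ↔ r k = rt k := by simp only [S, Finset.mem_filter, Finset.mem_univ, true_and]
  have hSne : S ≠ Finset.univ := fun h => hrtR <|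
    (funext fun k => (hS k).1 (h ▸ Finset.mem_univ k) : r = rt) ▸ hr
  obtain ⟨δ, hδ, hδP⟩ := exists_pow_div_two_le_PesK hW.1 hrate hPd hr hrtR hS
    (hE.trans_le (hi _ ⟨S, hSne, r, hr, rt, hrt, fun k => (hS k).1, rfl⟩))
  exact le_liminf_neg_log_div hδ (Nat.cast_pos.2 (Fintype.card_pos_iff.2 ⟨(∅, r)⟩))
    (fun N => hδP N (D N)) hDP
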